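/- Let X_1, …, X_k be topological spaces such that X_i is d_i-connected for each i (where d_i = −1 means X_i is nonempty). Then the iterated join X_1 * X_2 * ⋯ * X_k is (−2 + Σ_{i=1}^{k} (d_i + 2))-connected. -/

import Mathlib

/-!
The theorem reduces, by induction on the number of spaces, to the join of two spaces: if `X` is
`d`-connected and `Y` is `e`-connected then `X * Y` is `(d + e + 2)`-connected. Connectivity is
rephrased as an extension property (`BallExt`): a space is `d`-connected exactly when every map from
the unit sphere of `ℝ^k` to it, `k ≤ d + 1`, extends to the ball (`subsingleton_of_ballExt`,
`ballExt_of_isNConnected`). With `p = d + 1` and `q = e + 1` it remains to extend a map `f` from the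
sphere of `ℝ^N` to `X * Y` over the ball when `N ≤ p + q + 1`; this is `ballExt_join`. No
hypothesis on the topology of `X` and `Y` is available, so homology and cell structures on the
target are avoided, and all subdivision takes place in the source.

A map to the join consists of a join parameter together with a map to `X`, needed only where the
parameter is less than `1`, and a map to `Y`, needed only where it is positive. Extend `f` radially
to the complement of a large ball, so that its join parameter varies by less than `1/3` over
distance `1` (`exists_radius`). The lattice `ℤ^N` cuts `ℝ^N` into unit cubes; because `X` admits
extensions over balls of dimension at most `p`, the `X`-coordinate of `f` extends over the
`p`-skeleton of this cubical complex (`extend_skeleton`), and pushing each coordinate towards the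
nearest integer extends it further over a neighbourhood of that skeleton (`exists_push`). In the
same way the `Y`-coordinate extends over a neighbourhood of the `q`-skeleton of the dual lattice,
shifted by `1/2` in every direction. A real number is within `1/3` of `ℤ` or of `1/2 + ℤ`, so a
count of coordinates shows that for `N ≤ p + q + 1` the two neighbourhoods cover `ℝ^N`, and a
Urysohn function of the two complements serves as join parameter inside (`exists_separator`).
Outside, the join parameter is that of `f`, stretched so that it is constant near its two ends, and
the two parameters are interpolated in a shell in between. The resulting map on the ball agrees on
the boundary with `f` composed with a self-map of the join homotopic to the identity (`jH`), and the
homotopy extends `f` itself (`extend_of_homotopy`).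
-/

open scoped BigOperators unitInterval Classical

universe u v

/-! ### `d`-connected spaces and pairs -/

/-- A topological space is `d`-connected (`d : ℤ`) if it is nonempty (provided `-1 ≤ d`;
`(-1)`-connected just means nonempty) and all of its homotopy groups `π_n`, for
`0 ≤ n ≤ d` and every basepoint, are trivial. -/
def IsNConnected (d : ℤ) (X : Type u) [TopologicalSpace X] : Prop :=
  (-1 ≤ d → Nonempty X) ∧
    ∀ n : ℕ, (n : ℤ) ≤ d → ∀ x : X, Subsingleton (HomotopyGroup (Fin n) X x)

/-- A pair `(X, A)` is `m`-connected if the relative homotopy groups `π_i(X, A)` vanish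
for `i ≤ m`; equivalently, for every `i ≤ m` every continuous map from the closed `i`-ball
to `X` taking the boundary sphere into `A` is homotopic, rel the boundary sphere, to a map
with image contained in `A`. -/
def IsPairNConnected (m : ℤ) {X : Type u} [TopologicalSpace X] (A : Set X) : Prop :=
  ∀ i : ℕ, (i : ℤ) ≤ m →
    ∀ f : C(Metric.closedBall (0 : EuclideanSpace ℝ (Fin i)) 1, X),
      (∀ p : Metric.closedBall (0 : EuclideanSpace ℝ (Fin i)) 1,
          (p : EuclideanSpace ℝ (Fin i)) ∈ Metric.sphere (0 : EuclideanSpace ℝ (Fin i)) 1 →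
          f p ∈ A) →
      ∃ g : C(Metric.closedBall (0 : EuclideanSpace ℝ (Fin i)) 1, X),
        (∀ p, g p ∈ A) ∧
          f.HomotopicRel g
            {p : Metric.closedBall (0 : EuclideanSpace ℝ (Fin i)) 1 |
              (p : EuclideanSpace ℝ (Fin i)) ∈ Metric.sphere (0 : EuclideanSpace ℝ (Fin i)) 1}

/-! ### Abstract simplicial complexes -/

/-- An abstract simplicial complex on a vertex type `V`: a collection of finite subsets
of `V` (the faces, the empty face being allowed) closed under passing to subsets. -/
structure ASC (V : Type u) : Type u where
  faces : Set (Finset V)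
  down_closed : ∀ ⦃s t : Finset V⦄, s ∈ faces → t ⊆ s → t ∈ faces

namespace ASC

variable {V : Type u} {W : Type v}

/-- The vertex set of a simplicial complex. -/
def vtx (X : ASC V) : Set V := {v | {v} ∈ X.faces}

/-- The simplicial complex generated by a collection of finite sets. -/
def generate (S : Set (Finset V)) : ASC V where
  faces := {t | ∃ s ∈ S, t ⊆ s}
  down_closed := by
    rintro s t ⟨u, hu, hsu⟩ hts
    exact ⟨u, hu, hts.trans hsu⟩

/-- The full subcomplex spanned by the vertices satisfying a predicate `p`. -/
def fullSub (X : ASC V) (p : V → Prop) : ASC V where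
  faces := {s | s ∈ X.faces ∧ ∀ v ∈ s, p v}
  down_closed := by
    rintro s t ⟨hs, hp⟩ hts
    exact ⟨X.down_closed hs hts, fun v hv => hp v (hts hv)⟩

/-- The union of two simplicial complexes on the same vertex type. -/
def union (X Y : ASC V) : ASC V where
  faces := X.faces ∪ Y.faces
  down_closed := by
    rintro s t (hs | hs) hts
    · exact Or.inl (X.down_closed hs hts)
    · exact Or.inr (Y.down_closed hs hts)

/-- The link of a vertex `v` in `X`: all faces not containing `v` whose union with `v`
is again a face. -/
def link (X : ASC V) (v : V) : ASC V where
  faces := {s | s ∈ X.faces ∧ v ∉ s ∧ insert v s ∈ X.faces}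
  down_closed := by
    rintro s t ⟨hs, hv, hins⟩ hts
    exact ⟨X.down_closed hs hts, fun h => hv (hts h),
      X.down_closed hins (Finset.insert_subset_insert v hts)⟩

/-- The link of a simplex `sig` in `X`: all faces disjoint from `sig` whose union with `sig`
is again a face. -/
def linkF (X : ASC V) (sig : Finset V) : ASC V where
  faces := {s | s ∈ X.faces ∧ Disjoint s sig ∧ s ∪ sig ∈ X.faces}
  down_closed := by
    rintro s t ⟨hs, hd, hu⟩ hts
    exact ⟨X.down_closed hs hts, hd.mono_left hts,
      X.down_closed hu (Finset.union_subset_union hts (subset_refl sig))⟩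

/-- The `j`-skeleton of `X` (faces of dimension at most `j`, i.e. with at most `j + 1`
vertices); `j` is an integer so that the `(-1)`-skeleton consists of the empty face only. -/
def skelZ (X : ASC V) (j : ℤ) : ASC V where
  faces := {s | s ∈ X.faces ∧ (s.card : ℤ) ≤ j + 1}
  down_closed := by
    rintro s t ⟨hs, hc⟩ hts
    exact ⟨X.down_closed hs hts,
      le_trans (by exact_mod_cast Finset.card_le_card hts) hc⟩

/-- The boundary `∂sig` of a simplex `sig`: all proper subsets of `sig`. -/
def bdry (sig : Finset V) : ASC V where
  faces := {t | t ⊂ sig}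
  down_closed := by
    intro s t hs hts
    exact Finset.ssubset_of_subset_of_ssubset hts hs

/-- The nerve of a family of subsets of a space: the simplicial complex whose faces are the
finite subfamilies with nonempty intersection. -/
def nerve {X : Type v} {ι : Type u} (U : ι → Set X) : ASC ι where
  faces := {s | (⋂ i ∈ s, U i).Nonempty}
  down_closed := by
    intro s t hs hts
    exact hs.mono (Set.biInter_subset_biInter_left hts)

/-- The simplicial join of a finite family of simplicial complexes: faces are unions of one
face from each factor. -/
noncomputable def sigmaJoin {ι : Type u} [Fintype ι] {V' : ι → Type v}
    (X : ∀ i, ASC (V' i)) : ASC (Σ i, V' i) :=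
  generate {s | ∃ t : ∀ i, Finset (V' i), (∀ i, t i ∈ (X i).faces) ∧
    s = Finset.univ.biUnion fun i => (t i).image (Sigma.mk i)}

/-- The join, inside the vertex type `V`, of a set `A` of vertices (a discrete complex)
with a complex `X` on `V`: generated by the sets `{a} ∪ t` with `a ∈ A`, `t` a face of `X`. -/
noncomputable def coneJoin (A : Set V) (X : ASC V) : ASC V :=
  generate {s | ∃ a ∈ A, ∃ t ∈ X.faces, s = insert a t}

/-- The geometric realization of a simplicial complex, as the set of finitely supported
"barycentric coordinate" functions: convex weights supported on a face. Topologized as a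
subspace of the product topology on `V → ℝ`. -/
def real (X : ASC V) : Set (V → ℝ) :=
  {f | (∀ v, 0 ≤ f v) ∧ ∃ s ∈ X.faces, (∀ v, v ∉ s → f v = 0) ∧ ∑ v ∈ s, f v = 1}

theorem real_mono {X Y : ASC V} (h : X.faces ⊆ Y.faces) : X.real ⊆ Y.real := by
  rintro f ⟨h0, s, hs, hf⟩
  exact ⟨h0, s, h hs, hf⟩

/-- A simplicial complex is `d`-connected if its geometric realization is. -/
def NConn (d : ℤ) (X : ASC V) : Prop := IsNConnected d ↥X.real

/-- `SimplicialIsoOnto X Y φ`: the vertex map `φ` defines a simplicial map from `X` to `Y`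
which is an isomorphism of `X` onto `Y`. -/
def SimplicialIsoOnto (X : ASC V) (Y : ASC W) (φ : V → W) : Prop :=
  (∀ s ∈ X.faces, s.image φ ∈ Y.faces) ∧ Set.InjOn φ X.vtx ∧
    ∀ t ∈ Y.faces, ∃ s ∈ X.faces, s.image φ = t

/-- An isomorphism of simplicial complexes: a bijection of vertex sets inducing a bijection
of faces. -/
structure Iso (X : ASC V) (Y : ASC W) where
  vertEquiv : {v : V // {v} ∈ X.faces} ≃ {w : W // {w} ∈ Y.faces}
  map_faces : ∀ s : Finset {v : V // {v} ∈ X.faces},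
    s.image Subtype.val ∈ X.faces ↔ s.image (fun v => (vertEquiv v).val) ∈ Y.faces

/-- A simplicial complex is a tree if it is at most one-dimensional and its geometric
realization is contractible. -/
def IsTree {ι : Type u} (K : ASC ι) : Prop :=
  (∀ s ∈ K.faces, s.card ≤ 2) ∧ ContractibleSpace ↥K.real

end ASC

/-- `RelSkel B X j` is the union of the subcomplex `B` with the `j`-skeleton of `X`. -/
def RelSkel {V : Type u} (B X : ASC V) (j : ℤ) : ASC V := B.union (X.skelZ j)

/-! ### Topological joins -/

/-- The defining relation of the join `X * Y`: in `X × Y × [0,1]`, collapse `{x} × Y × {0}`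
and `X × {y} × {1}`. -/
inductive JoinRel (X : Type u) (Y : Type v) : X × Y × I → X × Y × I → Prop
  | fst : ∀ (x : X) (y y' : Y), JoinRel X Y (x, y, 0) (x, y', 0)
  | snd : ∀ (x x' : X) (y : Y), JoinRel X Y (x, y, 1) (x', y, 1)

/-- The topological join `X * Y` of two spaces: the quotient of `X × Y × [0,1]` by the
identifications `(x, y, 0) ~ (x, y', 0)` and `(x, y, 1) ~ (x', y, 1)`. -/
def TopJoin (X : Type u) (Y : Type v) : Type (max u v) := Quot (JoinRel X Y)

instance (X : Type u) (Y : Type v) [TopologicalSpace X] [TopologicalSpace Y] :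
    TopologicalSpace (TopJoin X Y) :=
  TopologicalSpace.coinduced (Quot.mk _) inferInstance

/-- The join of a discrete set `A` with a space `Y`. -/
def DiscJoin (A : Type u) (Y : Type v) : Type (max u v) := TopJoin A Y

instance (A : Type u) (Y : Type v) [TopologicalSpace Y] : TopologicalSpace (DiscJoin A Y) :=
  letI : TopologicalSpace A := ⊥
  inferInstanceAs (TopologicalSpace (TopJoin A Y))

/-! ### Partitions -/

/-- The refinement `P̃` of a partition `P` of `N` at `x`: it agrees with `P` away from the
part `P_x` of `x`, and splits `P_x` into `{x}` and `P_x - {x}`. (Partitions of `N` are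
encoded as equivalence relations, i.e. terms of `Setoid N`; parts are equivalence classes.) -/
def Setoid.partRefineAt {N : Type u} (P : Setoid N) (x : N) : Setoid N where
  r y z := P.r y z ∧ (y = x ↔ z = x)
  iseqv := ⟨fun y => ⟨P.refl' y, Iff.rfl⟩, fun h => ⟨P.symm' h.1, h.2.symm⟩,
    fun h h' => ⟨P.trans' h.1 h'.1, h.2.trans h'.2⟩⟩

/-- The partition `P'` of `N' = N - {x}` induced by a partition `P` of `N`. -/
def inducedPartition {N : Type u} (P : Setoid N) (x : N) : Setoid {y : N // y ≠ x} :=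
  P.comap Subtype.val

/-! ### An abstract theory of curve complexes of partitioned surfaces

`S_{g,N}` denotes a connected oriented surface of genus `g` with puncture (cusp) set `N`,
i.e. a closed oriented genus `g` surface minus the finite set `N`.  The following structure
records the combinatorial objects attached to such surfaces in Looijenga's
"Connectivity of complexes of separating curves": for each `(g, N)`, the set of vertices of
the curve complex `C(S_{g,N})` (isotopy classes of embedded circles bounding neither a disk
nor a cylinder), the curve complex itself, the relative separation predicate, the sets
`arc_{(S,P)}(x)`, and the map induced by filling in a puncture. -/
structure CurveComplexTheory : Type 1 where
  /-- the vertices of the curve complex of `S_{g,N}`: isotopy classes of embedded circles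
  in `S_{g,N}` which bound neither a disk nor a cylinder. -/
  Vertex : ℕ → Type → Type
  /-- the curve complex `C(S_{g,N})`: a finite set of vertices spans a simplex precisely
  when its elements can be represented by pairwise disjoint embedded circles. -/
  cplx : (g : ℕ) → (N : Type) → ASC (Vertex g N)
  empty_mem : ∀ g N, (∅ : Finset (Vertex g N)) ∈ (cplx g N).faces
  /-- `SepRel P v`: the vertex `v` is separating relative to the partition `P` of `N`,
  i.e. a representative circle `α` has the property that `S - α` has two connected
  components, each of which meets `N` in a union of parts of `P`.  For the discrete
  partition `⊥` this is the usual notion of a separating vertex. -/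
  SepRel : {g : ℕ} → {N : Type} → Setoid N → Vertex g N → Prop
  /-- `arc P x`: the set of vertices `α` of `C(S,P)` which, for some `y ∈ Σ_x` (i.e. some
  `y ≠ x` such that `{x, y}` is a union of parts of `P`), bound a disk neighborhood of
  `{x, y}` in `S ∪ {x, y}`; equivalently, the vertices of `C(S,P)` having no image in
  `C(S', P')` where `S'` is obtained by filling in the puncture `x`. -/
  arc : {g : ℕ} → {N : Type} → Setoid N → N → Set (Vertex g N)
  /-- the map on isotopy classes of circles induced by filling in the puncture `x`
  (meaningful on vertices that stay essential in `S' = S ∪ {x}`). -/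
  fill : {g : ℕ} → {N : Type} → (x : N) → Vertex g N → Vertex g {y : N // y ≠ x}

namespace CurveComplexTheory

variable (T : CurveComplexTheory)

/-- `C(S, P)`: the full subcomplex of the curve complex of `S = S_{g,N}` spanned by the
vertices that are separating relative to the partition `P` of `N`. -/
def cp (g : ℕ) (N : Type) (P : Setoid N) : ASC (T.Vertex g N) :=
  (T.cplx g N).fullSub (T.SepRel P)

/-- The separated curve complex `C_sep(S)`: the full subcomplex of `C(S)` spanned by the
separating vertices (separation relative to the discrete partition). -/
def csep (g : ℕ) (N : Type) : ASC (T.Vertex g N) := T.cp g N ⊥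

/-- `C(S, P)_x`: the full subcomplex of `C(S, P)` spanned by the vertices not in
`arc_{(S,P)}(x)`. -/
def cpx (g : ℕ) (N : Type) (P : Setoid N) (x : N) : ASC (T.Vertex g N) :=
  (T.cp g N P).fullSub fun v => v ∉ T.arc P x

end CurveComplexTheory

/-- The iterated topological join `X₁ * X₂ * ⋯ * Xₖ` of a list of spaces
(the join of the empty list is the empty space). -/
noncomputable def iterJoin : List TopCat.{0} → TopCat.{0}
  | [] => TopCat.of Empty
  | [X] => X
  | X :: Y :: r => TopCat.of (TopJoin X (iterJoin (Y :: r)))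

namespace JoinConn

open Set Metric

/-! ### Extending maps from spheres to balls -/

/-- `BallExt E X`: every continuous map from the unit sphere of `E` to `X` extends to the closed
unit ball. Maps are encoded as total functions that are continuous on the relevant set. -/
def BallExt (E X : Type*) [NormedAddCommGroup E] [TopologicalSpace X] : Prop :=
  ∀ g : E → X, ContinuousOn g (sphere 0 1) →
    ∃ g' : E → X, ContinuousOn g' (closedBall 0 1) ∧ EqOn g' g (sphere 0 1)

/-- The extension property for the ball passes to every convex body of the same dimension. -/
theorem BallExt.body {E F X : Type*} [NormedAddCommGroup E] [NormedSpace ℝ E]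
    [FiniteDimensional ℝ E] [NormedAddCommGroup F] [NormedSpace ℝ F] [FiniteDimensional ℝ F]
    [TopologicalSpace X] (h : BallExt E X)
    (hr : Module.finrank ℝ E = Module.finrank ℝ F) {C : Set F} (hc : Convex ℝ C)
    (hcl : IsClosed C) (hne : (interior C).Nonempty) (hb : Bornology.IsBounded C)
    (g : F → X) (hg : ContinuousOn g (frontier C)) :
    ∃ g' : F → X, ContinuousOn g' C ∧ EqOn g' g (frontier C) := by
  let L : E ≃L[ℝ] F := ContinuousLinearEquiv.ofFinrankEq hr
  have hDc : Convex ℝ (L ⁻¹' C) := hc.linear_preimage L.toLinearEquiv.toLinearMap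
  have hDcl : IsClosed (L ⁻¹' C) := hcl.preimage L.continuous
  have hDi : (interior (L ⁻¹' C)).Nonempty := by
    rw [show interior (L ⁻¹' C) = L ⁻¹' interior C from
      (L.toHomeomorph.preimage_interior C).symm]
    exact hne.preimage L.surjective
  have hDf : frontier (L ⁻¹' C) = L ⁻¹' frontier C :=
    (L.toHomeomorph.preimage_frontier C).symm
  have hDb : Bornology.IsBounded (L ⁻¹' C) := by
    have : L ⁻¹' C = L.symm '' C := by
      ext x
      simp only [mem_preimage, mem_image]
      exact ⟨fun hx => ⟨L x, hx, by simp⟩, by rintro ⟨y, hy, rfl⟩; simpa using hy⟩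
    rw [this]
    exact (L.symm : F →L[ℝ] E).lipschitz.isBounded_image hb
  obtain ⟨e, -, he1, he2⟩ := exists_homeomorph_image_interior_closure_frontier_eq_unitBall
    hDc hDi hDb
  rw [hDcl.closure_eq] at he1
  rw [hDf] at he2
  have hm2 : ∀ x ∈ frontier C, e (L.symm x) ∈ sphere (0 : E) 1 := fun x hx => by
    rw [← he2]
    exact mem_image_of_mem _ (by simpa using hx)
  have hm1 : ∀ x ∈ C, e (L.symm x) ∈ closedBall (0 : E) 1 := fun x hx => by
    rw [← he1]
    exact mem_image_of_mem _ (by simpa using hx)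
  have hm3 : ∀ x ∈ sphere (0 : E) 1, L (e.symm x) ∈ frontier C := fun x hx => by
    rw [← he2] at hx
    obtain ⟨y, hy, rfl⟩ := hx
    simpa using hy
  obtain ⟨G, hG1, hG2⟩ := h (fun x => g (L (e.symm x)))
    (hg.comp (L.continuous.comp e.symm.continuous).continuousOn hm3)
  refine ⟨fun x => G (e (L.symm x)),
    hG1.comp (e.continuous.comp L.symm.continuous).continuousOn hm1, fun x hx => ?_⟩
  simp [hG2 (hm2 x hx)]

theorem BallExt.congr {E F X : Type*} [NormedAddCommGroup E] [NormedSpace ℝ E]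
    [FiniteDimensional ℝ E] [NormedAddCommGroup F] [NormedSpace ℝ F] [FiniteDimensional ℝ F]
    [TopologicalSpace X] (h : BallExt E X)
    (hr : Module.finrank ℝ E = Module.finrank ℝ F) : BallExt F X := by
  intro g hg
  have hf : frontier (closedBall (0 : F) 1) = sphere 0 1 := frontier_closedBall _ one_ne_zero
  have := h.body hr (convex_closedBall (0 : F) 1) isClosed_closedBall
    (by rw [interior_closedBall _ one_ne_zero]; exact ⟨0, by simp⟩) isBounded_closedBall g
    (by rwa [hf])
  rwa [hf] at this

/-- The extension property is invariant under homotopy of the boundary map: the homotopy is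
inserted in the collar `1/2 ≤ ‖x‖ ≤ 1`. -/
theorem extend_of_homotopy {E X : Type*} [NormedAddCommGroup E] [NormedSpace ℝ E]
    [TopologicalSpace X] (f : E → X) (H : E → ℝ → X)
    (hH : ContinuousOn (fun p : E × ℝ => H p.1 p.2) (sphere 0 1 ×ˢ Icc 0 1))
    (h0 : ∀ x ∈ sphere (0 : E) 1, H x 0 = f x)
    (G : E → X) (hG : ContinuousOn G (closedBall 0 1))
    (h1 : ∀ x ∈ sphere (0 : E) 1, H x 1 = G x) :
    ∃ g' : E → X, ContinuousOn g' (closedBall 0 1) ∧ EqOn g' f (sphere 0 1) := by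
  let A : Set E := {x | ‖x‖ ≤ 1 / 2}
  let B : Set E := {x | 1 / 2 ≤ ‖x‖ ∧ ‖x‖ ≤ 1}
  have hA : IsClosed A := isClosed_le continuous_norm continuous_const
  have hB : IsClosed B := (isClosed_le continuous_const continuous_norm).inter
    (isClosed_le continuous_norm continuous_const)
  let g' : E → X := fun x => if ‖x‖ ≤ 1 / 2 then G ((2 : ℝ) • x) else
    H (‖x‖⁻¹ • x) (2 - 2 * ‖x‖)
  have hgA : EqOn g' (fun x => G ((2 : ℝ) • x)) A := fun x hx => if_pos hx
  have hsph : ∀ x ∈ B, ‖x‖⁻¹ • x ∈ sphere (0 : E) 1 := by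
    rintro x ⟨hx, -⟩
    have : 0 < ‖x‖ := by linarith
    simp [norm_smul, this.ne']
  have hgB : EqOn g' (fun x => H (‖x‖⁻¹ • x) (2 - 2 * ‖x‖)) B := by
    intro x hx
    by_cases hx' : ‖x‖ ≤ 1 / 2
    · have he : ‖x‖ = 1 / 2 := le_antisymm hx' hx.1
      have := h1 _ (hsph x hx)
      simp only [g', he] at this ⊢
      norm_num at this ⊢
      exact this.symm
    · exact if_neg hx'
  refine ⟨g', ?_, ?_⟩
  · have : closedBall (0 : E) 1 ⊆ A ∪ B := by
      intro x hx
      rw [mem_closedBall_zero_iff] at hx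
      rcases le_total ‖x‖ (1 / 2) with h | h
      · exact Or.inl h
      · exact Or.inr ⟨h, hx⟩
    refine ContinuousOn.mono ?_ this
    refine ContinuousOn.union_of_isClosed (ContinuousOn.congr ?_ hgA)
      (ContinuousOn.congr ?_ hgB) hA hB
    · refine hG.comp (by fun_prop) fun x hx => ?_
      rw [mem_closedBall_zero_iff, norm_smul]
      have : ‖x‖ ≤ 1 / 2 := hx
      norm_num
      linarith
    · refine hH.comp (f := fun x : E => (‖x‖⁻¹ • x, 2 - 2 * ‖x‖)) ?_ fun x hx => ?_
      · refine ContinuousOn.prodMk ?_ (by fun_prop)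
        refine ContinuousOn.smul (ContinuousOn.inv₀ (by fun_prop) ?_) (by fun_prop)
        rintro x ⟨hx, -⟩
        linarith
      · refine ⟨hsph x hx, ?_⟩
        have h1 := hx.1
        have h2 := hx.2
        constructor <;> simp only <;> linarith
  · intro x hx
    have hx' : ‖x‖ = 1 := by simpa using hx
    have := hgB (show x ∈ B from ⟨by rw [hx']; norm_num, hx'.le⟩)
    rw [this]
    simp only [hx']
    norm_num
    exact h0 x hx

end JoinConn

namespace JoinConn

open Set Metric

/-! ### Homotopy groups and the extension property -/

theorem mem_sphere_pi {ι : Type*} [Fintype ι] (y : ι → ℝ) :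
    y ∈ sphere (0 : ι → ℝ) 1 ↔ (∀ j, |y j| ≤ 1) ∧ ∃ j, |y j| = 1 := by
  rw [mem_sphere_zero_iff_norm]
  constructor
  · intro h
    have h1 : ∀ j, |y j| ≤ 1 := fun j => h ▸ norm_le_pi_norm y j
    refine ⟨h1, ?_⟩
    by_contra! hc
    have : ‖y‖ < 1 := (pi_norm_lt_iff one_pos).2 fun j => lt_of_le_of_ne (h1 j) (hc j)
    linarith
  · rintro ⟨h1, j, hj⟩
    refine le_antisymm ((pi_norm_le_iff_of_nonneg zero_le_one).2 h1) ?_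
    rw [← hj]
    exact norm_le_pi_norm y j

/-- The retraction of `ℝ` onto `[-1, 1]`, with `[-1, 1]` identified affinely with the unit
interval. -/
noncomputable def toI (y : ℝ) : I := projIcc 0 1 zero_le_one ((y + 1) / 2)

theorem continuous_toI : Continuous toI := continuous_projIcc.comp (by fun_prop)

theorem toI_sub (z : I) : toI (2 * (z : ℝ) - 1) = z := by
  unfold toI
  rw [show (2 * (z : ℝ) - 1 + 1) / 2 = z by ring]
  exact projIcc_val _ z

theorem coe_toI {y : ℝ} (hy : |y| ≤ 1) : (toI y : ℝ) = (y + 1) / 2 := by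
  unfold toI
  rw [abs_le] at hy
  rw [projIcc_of_mem _ ⟨by linarith, by linarith⟩]

theorem toI_one : toI 1 = 1 := by
  have := toI_sub 1
  norm_num at this
  exact this

theorem toI_neg_one : toI (-1) = 0 := by
  have := toI_sub 0
  norm_num at this
  exact this

/-- A generalized loop together with the constant loop defines a map on the boundary of the cube
of one dimension more; an extension to the cube is a null homotopy. -/
theorem subsingleton_of_ballExt {Z : Type*} [TopologicalSpace Z] (n : ℕ)
    (h : BallExt (Fin (n + 1) → ℝ) Z) (p : Z) : Subsingleton (HomotopyGroup (Fin n) Z p) := by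
  suffices key : ∀ f : GenLoop (Fin n) Z p, GenLoop.Homotopic f GenLoop.const by
    constructor
    intro a b
    induction a using Quotient.inductionOn with | _ a =>
    induction b using Quotient.inductionOn with | _ b =>
    exact Quotient.sound ((key a).trans (key b).symm)
  intro f
  let g : (Fin (n + 1) → ℝ) → Z := fun y => if y 0 = -1 then f (fun i => toI (y i.succ)) else p
  let C1 : Set (Fin (n + 1) → ℝ) := {y | y 0 = -1}
  let C2 : Set (Fin (n + 1) → ℝ) :=
    {y | y 0 = 1} ∪ ⋃ i : Fin n, ({y | y i.succ = 1} ∪ {y | y i.succ = -1})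
  have hC1 : IsClosed C1 := isClosed_eq (by fun_prop) (by fun_prop)
  have hC2 : IsClosed C2 := by
    refine IsClosed.union (isClosed_eq (by fun_prop) (by fun_prop)) ?_
    exact isClosed_iUnion_of_finite fun i =>
      (isClosed_eq (by fun_prop) (by fun_prop)).union (isClosed_eq (by fun_prop) (by fun_prop))
  have hg2 : EqOn g (fun _ => p) C2 := by
    rintro y hy
    by_cases h0 : y 0 = -1
    · simp only [g, if_pos h0]
      rcases hy with hy | hy
      · have : y 0 = 1 := hy
        linarith
      · obtain ⟨i, hi⟩ := mem_iUnion.1 hy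
        refine GenLoop.boundary f _ ⟨i, ?_⟩
        rcases hi with hi | hi
        · right
          simp only [show y i.succ = 1 from hi, toI_one]
        · left
          simp only [show y i.succ = -1 from hi, toI_neg_one]
    · exact if_neg h0
  have hsub : sphere (0 : Fin (n + 1) → ℝ) 1 ⊆ C1 ∪ C2 := by
    intro y hy
    obtain ⟨-, j, hj⟩ := (mem_sphere_pi y).1 hy
    rcases (abs_eq zero_le_one).1 hj with hj | hj <;> revert hj <;>
      refine Fin.cases (fun hj => ?_) (fun i hj => ?_) j
    · exact Or.inr (Or.inl hj)
    · exact Or.inr (Or.inr (mem_iUnion.2 ⟨i, Or.inl hj⟩))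
    · exact Or.inl hj
    · exact Or.inr (Or.inr (mem_iUnion.2 ⟨i, Or.inr hj⟩))
  have hg : ContinuousOn g (sphere 0 1) := by
    refine ContinuousOn.mono (ContinuousOn.union_of_isClosed ?_ ?_ hC1 hC2) hsub
    · have : EqOn g (fun y => f (fun i => toI (y i.succ))) C1 := fun y hy => if_pos hy
      refine ContinuousOn.congr (Continuous.continuousOn ?_) this
      exact f.1.continuous.comp (continuous_pi fun i => continuous_toI.comp (by fun_prop))
    · exact continuousOn_const.congr hg2
  obtain ⟨G, hG1, hG2⟩ := h g hg
  let c : I × (Fin n → I) → (Fin (n + 1) → ℝ) := fun q =>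
    Fin.cons (2 * (q.1 : ℝ) - 1) (fun i => 2 * (q.2 i : ℝ) - 1)
  have hcc : Continuous c := by
    refine continuous_pi fun j => ?_
    refine Fin.cases ?_ (fun i => ?_) j
    · simp only [c, Fin.cons_zero]
      fun_prop
    · simp only [c, Fin.cons_succ]
      fun_prop
  have hI : ∀ z : I, |2 * (z : ℝ) - 1| ≤ 1 := fun z => by
    rw [abs_le]
    constructor <;> linarith [z.2.1, z.2.2]
  have hcle : ∀ q j, |c q j| ≤ 1 := by
    intro q j
    refine Fin.cases ?_ (fun i => ?_) j
    · exact hI q.1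
    · exact hI (q.2 i)
  have hcb : ∀ q, c q ∈ closedBall (0 : Fin (n + 1) → ℝ) 1 := fun q => by
    rw [mem_closedBall_zero_iff, pi_norm_le_iff_of_nonneg zero_le_one]
    exact hcle q
  have hc0 : ∀ q, c q 0 = 2 * (q.1 : ℝ) - 1 := fun q => rfl
  have hcs : ∀ q (i : Fin n), c q i.succ = 2 * (q.2 i : ℝ) - 1 := fun q i => rfl
  -- the three kinds of boundary faces: bottom, top, and sides
  have e0 : ∀ z, G (c (0, z)) = f z := fun z => by
    rw [hG2 ((mem_sphere_pi _).2 ⟨hcle _, 0, by rw [hc0]; norm_num⟩)]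
    have : c (0, z) 0 = -1 := by rw [hc0]; norm_num
    simp only [g, if_pos this, hcs, toI_sub]
  have e1 : ∀ z, G (c (1, z)) = p := fun z => by
    rw [hG2 ((mem_sphere_pi _).2 ⟨hcle _, 0, by rw [hc0]; norm_num⟩)]
    exact hg2 (Or.inl (show c (1, z) 0 = 1 by rw [hc0]; norm_num))
  have e2 : ∀ t, ∀ z ∈ Cube.boundary (Fin n), G (c (t, z)) = p := by
    rintro t z ⟨i, hi⟩
    have hi' : c (t, z) i.succ = 1 ∨ c (t, z) i.succ = -1 := by
      rcases hi with hi | hi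
      · right; simp only [hcs, hi]; norm_num
      · left; simp only [hcs, hi]; norm_num
    rw [hG2 ((mem_sphere_pi _).2 ⟨hcle _, i.succ, (abs_eq zero_le_one).2 hi'⟩)]
    exact hg2 (Or.inr (mem_iUnion.2 ⟨i, hi'⟩))
  refine ⟨⟨⟨⟨fun q => G (c q), hG1.comp_continuous hcc hcb⟩, e0, e1⟩, ?_⟩⟩
  intro t z hz
  exact (e2 t z hz).trans (GenLoop.boundary f z hz).symm

/-- The standard collapse `D^n → S^n`, from the ball of the sup norm to the unit sphere of
`ℝ^n × ℝ` with the norm `‖w‖ + |h|`: the centre goes to the north pole and the boundary to the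
south pole. -/
noncomputable def wrap {n : ℕ} (y : Fin n → ℝ) : WithLp 1 ((Fin n → ℝ) × ℝ) :=
  WithLp.toLp 1 ((2 * min 1 ((1 - ‖y‖) / max ‖y‖ (1 / 2))) • y, 1 - 2 * ‖y‖)

theorem continuous_wrap {n : ℕ} :
    Continuous (wrap : (Fin n → ℝ) → WithLp 1 ((Fin n → ℝ) × ℝ)) := by
  unfold wrap
  refine (WithLp.prod_continuous_toLp 1 (Fin n → ℝ) ℝ).comp (Continuous.prodMk
    (f := fun y : Fin n → ℝ => (2 * min 1 ((1 - ‖y‖) / max ‖y‖ (1 / 2))) • y)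
    (g := fun y => 1 - 2 * ‖y‖) ?_ (by fun_prop))
  refine Continuous.smul ((continuous_const (y := (2 : ℝ))).mul
    ((continuous_const (y := (1 : ℝ))).min ?_)) continuous_id
  refine Continuous.div (by fun_prop) (by fun_prop) fun y => ?_
  have : (0 : ℝ) < max ‖y‖ (1 / 2) := lt_max_of_lt_right (by norm_num)
  exact this.ne'

theorem wrap_coeff_small {r : ℝ} (h : r ≤ 1 / 2) :
    min 1 ((1 - r) / max r (1 / 2)) = 1 := by
  rw [max_eq_right h, min_eq_left]
  rw [le_div_iff₀ (by norm_num)]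
  linarith

theorem wrap_coeff_large {r : ℝ} (h : 1 / 2 ≤ r) :
    min 1 ((1 - r) / max r (1 / 2)) = (1 - r) / r := by
  rw [max_eq_left h, min_eq_right]
  rw [div_le_iff₀ (by linarith)]
  linarith

theorem norm_wrap {n : ℕ} {y : Fin n → ℝ} (hy : ‖y‖ ≤ 1) : ‖wrap y‖ = 1 := by
  rw [WithLp.prod_norm_eq_of_L1]
  simp only [wrap, WithLp.toLp_fst, WithLp.toLp_snd, norm_smul, Real.norm_eq_abs]
  rcases le_total ‖y‖ (1 / 2) with h | h
  · rw [wrap_coeff_small h, abs_of_nonneg (show 0 ≤ 1 - 2 * ‖y‖ by linarith)]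
    norm_num
  · have h0 : 0 < ‖y‖ := by linarith
    rw [wrap_coeff_large h, abs_of_nonpos (show 1 - 2 * ‖y‖ ≤ 0 by linarith), abs_of_nonneg]
    · field_simp
      ring
    · exact mul_nonneg (by norm_num) (div_nonneg (by linarith) h0.le)

theorem wrap_of_norm_eq_one {n : ℕ} {y : Fin n → ℝ} (hy : ‖y‖ = 1) :
    wrap y = WithLp.toLp 1 (0, -1) := by
  unfold wrap
  rw [hy]
  norm_num

theorem wrap_inj {n : ℕ} {y y' : Fin n → ℝ} (hy : ‖y‖ < 1) (h : wrap y = wrap y') :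
    y = y' := by
  have h1 : 1 - 2 * ‖y‖ = 1 - 2 * ‖y'‖ := congrArg WithLp.snd h
  have hr : ‖y'‖ = ‖y‖ := by linarith
  have h2 : (2 * min 1 ((1 - ‖y‖) / max ‖y‖ (1 / 2))) • y =
      (2 * min 1 ((1 - ‖y'‖) / max ‖y'‖ (1 / 2))) • y' := congrArg WithLp.fst h
  rw [hr] at h2
  refine smul_right_injective _ ?_ h2
  have : 0 < min 1 ((1 - ‖y‖) / max ‖y‖ (1 / 2)) :=
    lt_min one_pos (div_pos (by linarith) (lt_max_of_lt_right (by norm_num)))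
  positivity

theorem wrap_surj {n : ℕ} (hn : n ≠ 0) {v : WithLp 1 ((Fin n → ℝ) × ℝ)} (hv : ‖v‖ = 1) :
    ∃ y, ‖y‖ ≤ 1 ∧ wrap y = v := by
  rw [WithLp.prod_norm_eq_of_L1, Real.norm_eq_abs] at hv
  have hw : 0 ≤ ‖v.fst‖ := norm_nonneg _
  have hh : |v.snd| ≤ 1 := by linarith
  rw [abs_le] at hh
  have ext' : ∀ y : Fin n → ℝ, ‖y‖ = (1 - v.snd) / 2 →
      (2 * min 1 ((1 - ‖y‖) / max ‖y‖ (1 / 2))) • y = v.fst → wrap y = v := by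
    intro y h1 h2
    unfold wrap
    rw [h2, h1]
    refine WithLp.ofLp_injective _ (Prod.ext rfl ?_)
    change 1 - 2 * ((1 - v.snd) / 2) = v.snd
    ring
  rcases le_total 0 v.snd with h | h
  · rw [abs_of_nonneg h] at hv
    have hn : ‖(1 / 2 : ℝ) • v.fst‖ = (1 - v.snd) / 2 := by
      rw [norm_smul]; norm_num; linarith
    refine ⟨(1 / 2 : ℝ) • v.fst, by rw [hn]; linarith, ext' _ hn ?_⟩
    rw [wrap_coeff_small (by rw [hn]; linarith), smul_smul]
    norm_num
  · rw [abs_of_nonpos h] at hv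
    rcases hh.1.eq_or_lt with h1 | h1
    · have : Nonempty (Fin n) := Fin.pos_iff_nonempty.1 (Nat.pos_of_ne_zero hn)
      have h0 : v.fst = 0 := norm_eq_zero.1 (by linarith)
      have hn : ‖(fun _ => 1 : Fin n → ℝ)‖ = 1 := by simp
      refine ⟨fun _ => 1, hn.le, ext' _ ?_ ?_⟩
      · rw [hn]; linarith
      · rw [hn, h0]; norm_num
    · have hp : 0 < ‖v.fst‖ := by linarith
      set r := (1 - v.snd) / 2 with hr
      have h2 : ‖v.fst‖ = 2 * (1 - r) := by rw [hr]; linarith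
      have hr1 : 1 - r ≠ 0 := by rw [hr]; intro h'; linarith
      have hr0 : 0 < r := by rw [hr]; linarith
      have hr2 : 0 < 1 - r := by rw [hr]; linarith
      have hn : ‖(r / (2 * (1 - r))) • v.fst‖ = r := by
        rw [norm_smul, h2, Real.norm_of_nonneg (by positivity)]
        field_simp
      refine ⟨(r / (2 * (1 - r))) • v.fst, by rw [hn]; linarith, ext' _ hn ?_⟩
      rw [hn, wrap_coeff_large (by rw [hr]; linarith), smul_smul]
      rw [show 2 * ((1 - r) / r) * (r / (2 * (1 - r))) = 1 by field_simp, one_smul]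

/-- If `π_n` is trivial at all base points then maps `S^n → X` extend to the ball: composing with
`D^n → S^n` gives a generalized loop, and a null homotopy of it factors through the quotient
`D^n × I → D^{n+1}`. -/
theorem ballExt_of_subsingleton_pos {X : Type*} [TopologicalSpace X] {n : ℕ} (hn : n ≠ 0)
    (h : ∀ x : X, Subsingleton (HomotopyGroup (Fin n) X x)) :
    BallExt (WithLp 1 ((Fin n → ℝ) × ℝ)) X := by
  intro g hg
  set p : X := g (WithLp.toLp 1 (0, -1)) with hp
  let c : (Fin n → I) → (Fin n → ℝ) := fun z i => 2 * (z i : ℝ) - 1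
  have hcc : Continuous c := by fun_prop
  have hcI : ∀ z : I, |2 * (z : ℝ) - 1| ≤ 1 := fun z => by
    rw [abs_le]
    constructor <;> linarith [z.2.1, z.2.2]
  have hc1 : ∀ z, ‖c z‖ ≤ 1 := fun z =>
    (pi_norm_le_iff_of_nonneg zero_le_one).2 fun i => hcI _
  have hcinj : Function.Injective c := by
    intro z z' hz
    funext i
    have := congrFun hz i
    simp only [c] at this
    exact Subtype.ext (by linarith)
  have hcsurj : ∀ y : Fin n → ℝ, ‖y‖ ≤ 1 → ∃ z, c z = y := by
    intro y hy
    refine ⟨fun i => toI (y i), funext fun i => ?_⟩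
    simp only [c]
    rw [coe_toI ((norm_le_pi_norm y i).trans hy)]
    ring
  have hcb : ∀ z, ‖c z‖ = 1 ↔ z ∈ Cube.boundary (Fin n) := by
    intro z
    rw [← mem_sphere_zero_iff_norm, mem_sphere_pi]
    constructor
    · rintro ⟨-, i, hi⟩
      refine ⟨i, ?_⟩
      rcases (abs_eq zero_le_one).1 hi with hi | hi
      · right
        exact Subtype.ext (show (z i : ℝ) = 1 by simp only [c] at hi; linarith)
      · left
        exact Subtype.ext (show (z i : ℝ) = 0 by simp only [c] at hi; linarith)
    · rintro ⟨i, hi⟩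
      refine ⟨fun j => hcI _, i, ?_⟩
      rcases hi with hi | hi <;> simp [c, hi]
      norm_num
  have hwc : Continuous fun z => g (wrap (c z)) :=
    hg.comp_continuous (continuous_wrap.comp hcc)
      fun z => mem_sphere_zero_iff_norm.2 (norm_wrap (hc1 z))
  let f : GenLoop (Fin n) X p := ⟨⟨fun z => g (wrap (c z)), hwc⟩, fun z hz => by
    change g (wrap (c z)) = p
    rw [wrap_of_norm_eq_one ((hcb z).2 hz)]⟩
  have hf : ∀ z, f z = g (wrap (c z)) := fun z => rfl
  have hfc : GenLoop.Homotopic f GenLoop.const :=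
    Quotient.exact ((h p).elim (Quotient.mk _ f) (Quotient.mk _ GenLoop.const))
  obtain ⟨H⟩ := hfc
  have H0 : ∀ z, H (0, z) = g (wrap (c z)) := fun z => H.map_zero_left z
  have H1 : ∀ z, H (1, z) = p := fun z => H.map_one_left z
  have Hb : ∀ t, ∀ z ∈ Cube.boundary (Fin n), H (t, z) = p := fun t z hz => by
    rw [H.eq_fst t hz]
    exact GenLoop.boundary f z hz
  let Φ : I × (Fin n → I) → closedBall (0 : WithLp 1 ((Fin n → ℝ) × ℝ)) 1 := fun q =>
    ⟨(1 - (q.1 : ℝ)) • wrap (c q.2), by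
      rw [mem_closedBall_zero_iff, norm_smul, norm_wrap (hc1 _), mul_one, Real.norm_eq_abs, abs_le]
      constructor <;> linarith [q.1.2.1, q.1.2.2]⟩
  have hΦc : Continuous Φ := by
    refine Continuous.subtype_mk ?_ _
    exact Continuous.smul (f := fun q : I × (Fin n → I) => 1 - (q.1 : ℝ)) (by fun_prop)
      (continuous_wrap.comp (hcc.comp continuous_snd))
  have hΦn : ∀ q, ‖(Φ q : WithLp 1 ((Fin n → ℝ) × ℝ))‖ = 1 - q.1 := fun q => by
    simp only [Φ]
    rw [norm_smul, norm_wrap (hc1 _), mul_one, Real.norm_of_nonneg]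
    linarith [q.1.2.2]
  have hΦs : Function.Surjective Φ := by
    rintro ⟨v, hv⟩
    rw [mem_closedBall_zero_iff] at hv
    by_cases h0 : v = 0
    · refine ⟨(1, fun _ => 0), Subtype.ext ?_⟩
      simp [Φ, h0]
    · have hv0 : ‖v‖ ≠ 0 := norm_ne_zero_iff.2 h0
      obtain ⟨y, hy1, hy2⟩ := wrap_surj hn (v := ‖v‖⁻¹ • v) (by
        rw [norm_smul, norm_inv, norm_norm, inv_mul_cancel₀ hv0])
      obtain ⟨z, rfl⟩ := hcsurj y hy1
      refine ⟨(⟨1 - ‖v‖, by linarith, by linarith [norm_nonneg v]⟩, z), Subtype.ext ?_⟩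
      simp only [Φ, hy2]
      rw [sub_sub_cancel, smul_smul, mul_inv_cancel₀ hv0, one_smul]
  have hq : Topology.IsQuotientMap Φ := hΦc.isClosedMap.isQuotientMap hΦc hΦs
  have hfac : ∀ a b, Φ a = Φ b → H a = H b := by
    rintro ⟨s, z⟩ ⟨s', z'⟩ hab
    have hs : s = s' := by
      have h1 := hΦn (s, z)
      have h2 := hΦn (s', z')
      rw [hab, h2] at h1
      simp only at h1
      exact Subtype.ext (by linarith)
    subst hs
    by_cases hs1 : s = 1
    · rw [hs1, H1, H1]
    · have hs2 : (1 - (s : ℝ)) ≠ 0 := fun h' =>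
        hs1 (Subtype.ext (show (s : ℝ) = 1 by linarith))
      have hw : wrap (c z) = wrap (c z') :=
        smul_right_injective _ hs2 (congrArg Subtype.val hab)
      rcases (hc1 z).lt_or_eq with hlt | heq
      · rw [hcinj (wrap_inj hlt hw)]
      · rcases (hc1 z').lt_or_eq with hlt' | heq'
        · rw [hcinj (wrap_inj hlt' hw.symm)]
        · rw [Hb _ _ ((hcb z).1 heq), Hb _ _ ((hcb z').1 heq')]
  let G : closedBall (0 : WithLp 1 ((Fin n → ℝ) × ℝ)) 1 → X :=
    fun v => H (Function.surjInv hΦs v)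
  have hG : ∀ q, G (Φ q) = H q := fun q => hfac _ _ (Function.surjInv_eq hΦs _)
  have hGc : Continuous G := by
    rw [hq.continuous_iff, show G ∘ Φ = H from funext hG]
    exact H.continuous
  refine ⟨fun x => if hx : x ∈ closedBall 0 1 then G ⟨x, hx⟩ else p, ?_, ?_⟩
  · rw [continuousOn_iff_continuous_domRestrict]
    convert hGc using 1
    funext x
    simp only [domRestrict_apply]
    rw [dif_pos x.2]
  · intro x hx
    have hx' := sphere_subset_closedBall hx
    simp only
    rw [dif_pos hx']
    obtain ⟨⟨s, z⟩, hq'⟩ := hΦs ⟨x, hx'⟩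
    have hs : s = 0 := by
      have := hΦn (s, z)
      rw [hq', mem_sphere_zero_iff_norm.1 hx] at this
      simp only at this
      exact Subtype.ext (show (s : ℝ) = 0 by linarith)
    subst hs
    rw [← hq', hG, H0]
    have : x = wrap (c z) := by
      have := congrArg Subtype.val hq'
      simpa [Φ] using this.symm
    rw [this]

theorem ballExt_one {X : Type*} [TopologicalSpace X]
    (h : ∀ x : X, Subsingleton (HomotopyGroup (Fin 0) X x)) :
    BallExt (Fin 1 → ℝ) X := by
  intro g hg
  have hj : Joined (g fun _ => -1) (g fun _ => 1) := by
    have := h (g fun _ => -1)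
    have : Subsingleton (ZerothHomotopy X) :=
      (HomotopyGroup.pi0EquivZerothHomotopy (x := g fun _ => -1)).symm.subsingleton
    exact Quotient.exact (Subsingleton.elim (α := ZerothHomotopy X) (Quotient.mk (pathSetoid X) _)
      (Quotient.mk (pathSetoid X) _))
  refine ⟨fun x => hj.somePath (toI (x 0)),
    (hj.somePath.continuous.comp (continuous_toI.comp (by fun_prop))).continuousOn, ?_⟩
  intro x hx
  obtain ⟨-, j, hj'⟩ := (mem_sphere_pi x).1 hx
  rw [Subsingleton.elim j 0] at hj'
  simp only
  rcases (abs_eq zero_le_one).1 hj' with h0 | h0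
  · have : x = fun _ => 1 := funext fun i => by rw [Subsingleton.elim i 0, h0]
    rw [h0, toI_one, Path.target, this]
  · have : x = fun _ => -1 := funext fun i => by rw [Subsingleton.elim i 0, h0]
    rw [h0, toI_neg_one, Path.source, this]

/-- A `d`-connected space admits extensions over balls of dimension at most `d + 1`. -/
theorem ballExt_of_isNConnected {X : Type*} [TopologicalSpace X] {d : ℤ}
    (h : IsNConnected d X) (k : ℕ) (hk : (k : ℤ) ≤ d + 1) : BallExt (Fin k → ℝ) X := by
  rcases k with _ | n
  · intro g _
    exact ⟨g, (continuous_of_const fun x y => by rw [Subsingleton.elim x y]).continuousOn,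
      fun _ _ => rfl⟩
  · push_cast at hk
    have hn := h.2 n (by linarith)
    rcases Nat.eq_zero_or_pos n with rfl | hpos
    · exact ballExt_one hn
    · refine (ballExt_of_subsingleton_pos hpos.ne' hn).congr ?_
      rw [(WithLp.linearEquiv 1 ℝ ((Fin n → ℝ) × ℝ)).finrank_eq]
      simp

end JoinConn

/-! ### Extending maps over the skeleta of the cubical lattice -/

namespace JoinConn

open Set Metric

variable {N : ℕ}

/-- The cell of the unit cubical lattice of `ℝ^N` with least corner `e.1` and set of free
coordinate directions `e.2`. Its dimension is `e.2.card`. -/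
def cell (e : (Fin N → ℤ) × Finset (Fin N)) : Set (Fin N → ℝ) :=
  {x | ∀ j, (e.1 j : ℝ) ≤ x j ∧ x j ≤ e.1 j + if j ∈ e.2 then 1 else 0}

/-- The relative interior of a cell. -/
def cellInt (e : (Fin N → ℤ) × Finset (Fin N)) : Set (Fin N → ℝ) :=
  {x | ∀ j, if j ∈ e.2 then (e.1 j : ℝ) < x j ∧ x j < e.1 j + 1 else x j = e.1 j}

theorem isClosed_cell (e : (Fin N → ℤ) × Finset (Fin N)) : IsClosed (cell e) := by
  simp only [cell, ofPred_forall, ofPred_and]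
  refine isClosed_iInter fun j => IsClosed.inter ?_ ?_
  · exact isClosed_le continuous_const (continuous_apply j)
  · exact isClosed_le (continuous_apply j) continuous_const

/-- A subset of `ℝ^N` is cellular when it contains every cell whose relative interior it meets. -/
def Cellular (P : Set (Fin N → ℝ)) : Prop :=
  ∀ e : (Fin N → ℤ) × Finset (Fin N), (cellInt e ∩ P).Nonempty → cell e ⊆ P

theorem cellular_cell (e' : (Fin N → ℤ) × Finset (Fin N)) : Cellular (cell e') := by
  rintro e ⟨x, hx, hx'⟩ z hz j
  have h1 := hx j
  have h2 := hx' j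
  have h3 := hz j
  by_cases hj : j ∈ e.2
  · simp only [hj, if_true] at h1 h3
    by_cases hj' : j ∈ e'.2
    · simp only [hj', if_true] at h2 ⊢
      have a1 : e.1 j < e'.1 j + 1 := by exact_mod_cast h1.1.trans_le h2.2
      have a2 : e'.1 j < e.1 j + 1 := by exact_mod_cast h2.1.trans_lt h1.2
      have a3 : e.1 j = e'.1 j := by omega
      rw [← a3]
      exact h3
    · simp only [hj', if_false] at h2
      have a1 : e.1 j < e'.1 j := by
        have : (e.1 j : ℝ) < e'.1 j := by linarith
        exact_mod_cast this
      have a2 : e'.1 j < e.1 j + 1 := by exact_mod_cast h2.1.trans_lt h1.2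
      omega
  · simp only [hj, if_false] at h1 h3
    have : z j = x j := by linarith
    rw [this]
    exact h2

theorem Cellular.union {P Q : Set (Fin N → ℝ)} (hP : Cellular P) (hQ : Cellular Q) :
    Cellular (P ∪ Q) := by
  rintro e ⟨x, hx, h | h⟩
  · exact (hP e ⟨x, hx, h⟩).trans subset_union_left
  · exact (hQ e ⟨x, hx, h⟩).trans subset_union_right

theorem cellular_biUnion (s : Finset ((Fin N → ℤ) × Finset (Fin N))) :
    Cellular (⋃ e ∈ s, cell e) := by
  rintro e ⟨x, hx, h⟩
  simp only [mem_iUnion, exists_prop] at h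
  obtain ⟨e', he', h⟩ := h
  exact (cellular_cell e' e ⟨x, hx, h⟩).trans (subset_biUnion_of_mem (u := cell) he')

/-- A point of a cell off its relative interior lies on a facet. -/
theorem exists_facet {e : (Fin N → ℤ) × Finset (Fin N)} {x : Fin N → ℝ} (hx : x ∈ cell e)
    (hx' : x ∉ cellInt e) :
    ∃ e' : (Fin N → ℤ) × Finset (Fin N), e'.2.card < e.2.card ∧ cell e' ⊆ cell e ∧
      x ∈ cell e' := by
  simp only [cellInt, mem_ofPred_eq, not_forall] at hx'
  obtain ⟨j, hj⟩ := hx'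
  have hxj := hx j
  by_cases hjS : j ∈ e.2
  · simp only [hjS, if_true] at hj hxj
    have key : ∃ m : ℤ, x j = m ∧ (e.1 j = m ∨ e.1 j + 1 = m) := by
      rcases hxj.1.eq_or_lt with h | h
      · exact ⟨e.1 j, h.symm, Or.inl rfl⟩
      · refine ⟨e.1 j + 1, ?_, Or.inr rfl⟩
        push_cast
        by_contra hne
        exact hj ⟨h, lt_of_le_of_ne hxj.2 hne⟩
    obtain ⟨m, hm, hm'⟩ := key
    refine ⟨(Function.update e.1 j m, e.2.erase j), Finset.card_erase_lt_of_mem hjS, ?_, ?_⟩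
    · intro z hz i
      have hzi := hz i
      by_cases hi : i = j
      · subst hi
        simp only [Function.update_self, Finset.mem_erase, ne_eq, not_true_eq_false, false_and,
          if_false] at hzi
        simp only [hjS, if_true]
        rcases hm' with h | h
        · rw [h]
          constructor <;> linarith
        · have : (e.1 i : ℝ) + 1 = m := by exact_mod_cast h
          constructor <;> linarith
      · simpa [Function.update_of_ne hi, hi] using hzi
    · intro i
      by_cases hi : i = j
      · subst hi
        simp [hm]
      · simpa [Function.update_of_ne hi, hi] using hx i
  · simp only [hjS, if_false] at hj hxj
    exact absurd (by linarith) hj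

/-- Extension over one cell whose boundary lies in the domain of the map. -/
theorem extend_cell {X : Type*} [TopologicalSpace X] {P : Set (Fin N → ℝ)} (hP : IsClosed P)
    {a : (Fin N → ℝ) → X} (ha : ContinuousOn a P) (e : (Fin N → ℤ) × Finset (Fin N))
    (hX : BallExt (Fin e.2.card → ℝ) X) (hbd : cell e \ cellInt e ⊆ P)
    (hint : ¬ (cellInt e ∩ P).Nonempty) :
    ∃ a' : (Fin N → ℝ) → X, ContinuousOn a' (P ∪ cell e) ∧ EqOn a' a P := by
  let ψ : (↥e.2 → ℝ) → (Fin N → ℝ) := fun y j =>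
    if h : j ∈ e.2 then e.1 j + y ⟨j, h⟩ else e.1 j
  let π : (Fin N → ℝ) → (↥e.2 → ℝ) := fun x j => x j - e.1 j
  have hψ : Continuous ψ := by
    refine continuous_pi fun j => ?_
    by_cases h : j ∈ e.2
    · simp only [ψ, h, dif_pos]
      fun_prop
    · simp only [ψ, h, dif_neg, not_false_eq_true]
      fun_prop
  have hπ : Continuous π := by
    refine continuous_pi fun j => ?_
    simp only [π]
    fun_prop
  have hintC : interior (Icc (0 : ↥e.2 → ℝ) 1) = univ.pi fun _ => Ioo (0 : ℝ) 1 := by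
    rw [← Set.pi_univ_Icc, interior_pi_set finite_univ]
    simp
  have hψπ : ∀ x ∈ cell e, ψ (π x) = x := by
    intro x hx
    funext j
    by_cases h : j ∈ e.2
    · simp [ψ, π, h]
    · have := hx j
      simp only [h, if_false] at this
      simp only [ψ, h, dif_neg, not_false_eq_true]
      linarith
  have hπC : ∀ x ∈ cell e, π x ∈ Icc (0 : ↥e.2 → ℝ) 1 := by
    intro x hx
    constructor <;> intro j <;> have := hx j <;> simp only [j.2, if_true] at this <;>
      simp only [π, Pi.zero_apply, Pi.one_apply] <;> linarith
  have hψC : ∀ y ∈ Icc (0 : ↥e.2 → ℝ) 1, ψ y ∈ cell e := by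
    intro y hy j
    by_cases h : j ∈ e.2
    · have h1 := hy.1 ⟨j, h⟩
      have h2 := hy.2 ⟨j, h⟩
      simp only [Pi.zero_apply, Pi.one_apply] at h1 h2
      simp only [ψ, h, dif_pos, if_true]
      constructor <;> linarith
    · simp [ψ, h]
  have hfr : frontier (Icc (0 : ↥e.2 → ℝ) 1) =
      Icc (0 : ↥e.2 → ℝ) 1 \ univ.pi fun _ => Ioo (0 : ℝ) 1 := by
    rw [isClosed_Icc.frontier_eq, hintC]
  have hψfr : MapsTo ψ (frontier (Icc (0 : ↥e.2 → ℝ) 1)) P := by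
    intro y hy
    rw [hfr] at hy
    refine hbd ⟨hψC y hy.1, fun hc => hy.2 fun j _ => ?_⟩
    have := hc j
    simp only [j.2, if_true, ψ, dif_pos] at this
    constructor <;> linarith [this.1, this.2]
  obtain ⟨g', hg', hg'e⟩ := hX.body (F := ↥e.2 → ℝ) (C := Icc 0 1) (by simp)
    (convex_Icc 0 1) isClosed_Icc
    (by
      rw [hintC]
      exact ⟨fun _ => 1 / 2, fun _ _ => by constructor <;> norm_num⟩)
    (isBounded_Icc 0 1) (a ∘ ψ) (ha.comp hψ.continuousOn hψfr)
  have hagree : ∀ x ∈ cell e, x ∈ P → g' (π x) = a x := by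
    intro x hx hxP
    have hxi : x ∉ cellInt e := fun h => hint ⟨x, h, hxP⟩
    have : π x ∈ frontier (Icc (0 : ↥e.2 → ℝ) 1) := by
      rw [hfr]
      refine ⟨hπC x hx, fun hc => hxi fun j => ?_⟩
      by_cases h : j ∈ e.2
      · have := hc ⟨j, h⟩ trivial
        simp only [π, mem_Ioo] at this
        simp only [h, if_true]
        constructor <;> linarith [this.1, this.2]
      · have := hx j
        simp only [h, if_false] at this ⊢
        linarith
    rw [hg'e this, Function.comp_apply, hψπ x hx]
  refine ⟨fun x => if x ∈ P then a x else g' (π x), ?_, fun x hx => by simp [hx]⟩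
  refine ContinuousOn.union_of_isClosed (ha.congr fun x hx => by simp [hx]) ?_ hP
    (isClosed_cell e)
  refine (hg'.comp hπ.continuousOn hπC).congr fun x hx => ?_
  by_cases h : x ∈ P
  · simp [h, hagree x hx h]
  · simp [h]

/-- Extension over the `p`-skeleton of a finite subcomplex `G` of the cubical lattice, relative to
a closed cellular set `A`, when the target admits extensions over balls of dimension at most `p`. -/
theorem extend_skeleton {X : Type*} [TopologicalSpace X] {p : ℕ}
    (hX : ∀ k ≤ p, BallExt (Fin k → ℝ) X) {A : Set (Fin N → ℝ)} (hA : IsClosed A)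
    (hAc : Cellular A) {a : (Fin N → ℝ) → X} (ha : ContinuousOn a A)
    (G : Finset ((Fin N → ℤ) × Finset (Fin N)))
    (hG : ∀ e ∈ G, ∀ e', cell e' ⊆ cell e → e' ∈ G) :
    ∃ a' : (Fin N → ℝ) → X,
      ContinuousOn a' (A ∪ ⋃ e ∈ G.filter fun e => e.2.card < p + 1, cell e) ∧ EqOn a' a A := by
  suffices H : ∀ k ≤ p + 1, ∃ a' : (Fin N → ℝ) → X,
      ContinuousOn a' (A ∪ ⋃ e ∈ G.filter fun e => e.2.card < k, cell e) ∧ EqOn a' a A from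
    H (p + 1) le_rfl
  intro k
  induction k with
  | zero => exact fun _ => ⟨a, by simpa using ha, fun _ _ => rfl⟩
  | succ k ih =>
    intro hk
    obtain ⟨a₀, ha₀, hea₀⟩ := ih (by omega)
    suffices H : ∀ s ⊆ G.filter fun e => e.2.card = k, ∃ a' : (Fin N → ℝ) → X,
        ContinuousOn a' (A ∪ ⋃ e ∈ (G.filter fun e => e.2.card < k) ∪ s, cell e) ∧
          EqOn a' a A by
      have := H _ subset_rfl
      rw [← Finset.filter_or] at this
      simpa only [← Nat.le_iff_lt_or_eq, ← Nat.lt_succ_iff] using this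
    intro s
    induction s using Finset.induction_on with
    | empty => exact fun _ => ⟨a₀, by simpa using ha₀, hea₀⟩
    | insert e s _ ihs =>
      intro hs
      obtain ⟨heG, hek⟩ := Finset.mem_filter.1 (hs (Finset.mem_insert_self e s))
      obtain ⟨a₁, ha₁, hea₁⟩ := ihs fun x hx => hs (Finset.mem_insert_of_mem hx)
      set P := A ∪ ⋃ e ∈ (G.filter fun e => e.2.card < k) ∪ s, cell e with hPdef
      have hP : IsClosed P :=
        hA.union (Set.Finite.isClosed_biUnion (Finset.finite_toSet _) fun e _ => isClosed_cell e)
      have hPc : Cellular P := hAc.union (cellular_biUnion _)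
      suffices H : ∃ a' : (Fin N → ℝ) → X, ContinuousOn a' (P ∪ cell e) ∧ EqOn a' a A by
        obtain ⟨a', ha', hea'⟩ := H
        refine ⟨a', ha'.mono ?_, hea'⟩
        rintro x (hx | hx)
        · exact Or.inl (Or.inl hx)
        · simp only [mem_iUnion, exists_prop] at hx
          obtain ⟨e', he', hx⟩ := hx
          rcases Finset.mem_union.1 he' with h | h
          · exact Or.inl (Or.inr (mem_biUnion (Finset.mem_coe.2 (Finset.mem_union_left _ h)) hx))
          · rcases Finset.mem_insert.1 h with rfl | h
            · exact Or.inr hx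
            · exact Or.inl
                (Or.inr (mem_biUnion (Finset.mem_coe.2 (Finset.mem_union_right _ h)) hx))
      by_cases hint : (cellInt e ∩ P).Nonempty
      · rw [union_eq_self_of_subset_right (hPc e hint)]
        exact ⟨a₁, ha₁, hea₁⟩
      · obtain ⟨a', ha', hea'⟩ := extend_cell hP ha₁ e (hX _ (by omega)) (by
          rintro x ⟨hx, hx'⟩
          obtain ⟨e', h1, h2, h3⟩ := exists_facet hx hx'
          refine Or.inr (mem_biUnion (x := e') ?_ h3)
          exact Finset.mem_coe.2 (Finset.mem_union_left _
            (Finset.mem_filter.2 ⟨hG e heG e' h2, by omega⟩))) hint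
        exact ⟨a', ha', fun x hx => (hea' (Or.inl hx)).trans (hea₁ hx)⟩

end JoinConn

/-! ### Pushing towards the lattice -/

namespace JoinConn

open Set Metric

/-- Clamping of a real number to `[0, 1]`. -/
noncomputable def clamp (t : ℝ) : ℝ := max 0 (min 1 t)

theorem continuous_clamp : Continuous clamp := by
  unfold clamp
  fun_prop

theorem clamp_nonneg (t : ℝ) : 0 ≤ clamp t := le_max_left _ _

theorem clamp_le_one (t : ℝ) : clamp t ≤ 1 := max_le zero_le_one (min_le_left _ _)

theorem clamp_of_nonpos {t : ℝ} (h : t ≤ 0) : clamp t = 0 := by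
  unfold clamp
  rw [max_eq_left]
  exact (min_le_right _ _).trans h

theorem clamp_of_one_le {t : ℝ} (h : 1 ≤ t) : clamp t = 1 := by
  unfold clamp
  rw [min_eq_left h, max_eq_right zero_le_one]

/-- For `l` from `0` to `1`, a deformation of the line that preserves every interval `[m, m + 1]`
with `m` an integer, from the identity to a map that is constant with value `m` on
`[m - 1/3, m + 1/3]`. -/
noncomputable def push (l y : ℝ) : ℝ :=
  y + l * (clamp (3 * Int.fract y - 1) - Int.fract y)

theorem continuous_push : Continuous fun p : ℝ × ℝ => push p.1 p.2 := by
  have h : Continuous fun y : ℝ => clamp (3 * Int.fract y - 1) - Int.fract y := by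
    refine ContinuousOn.comp_fract'' (f := fun u : ℝ => clamp (3 * u - 1) - u) ?_ ?_
    · exact ((continuous_clamp.comp (by fun_prop)).sub continuous_id).continuousOn
    · rw [clamp_of_nonpos (by norm_num), clamp_of_one_le (by norm_num)]
      norm_num
  unfold push
  exact continuous_snd.add (continuous_fst.mul (h.comp continuous_snd))

theorem push_zero (y : ℝ) : push 0 y = y := by simp [push]

theorem push_int (l : ℝ) (m : ℤ) : push l m = m := by
  simp [push, clamp_of_nonpos]

theorem push_mem {l y : ℝ} {m : ℤ} (hl : l ∈ Icc (0 : ℝ) 1) (hy : y ∈ Icc (m : ℝ) (m + 1)) :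
    push l y ∈ Icc (m : ℝ) (m + 1) := by
  rcases hy.2.eq_or_lt with h | h
  · have : y = ((m + 1 : ℤ) : ℝ) := by push_cast; exact h
    rw [this, push_int]
    push_cast
    constructor <;> linarith
  · have hf : ⌊y⌋ = m := Int.floor_eq_iff.2 ⟨hy.1, h⟩
    have h1 : Int.fract y = y - m := by rw [← Int.self_sub_floor, hf]
    have h2 := clamp_nonneg (3 * Int.fract y - 1)
    have h3 := clamp_le_one (3 * Int.fract y - 1)
    unfold push
    generalize clamp (3 * Int.fract y - 1) = c at *
    rw [h1]
    obtain ⟨hl0, hl1⟩ := hl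
    obtain ⟨hy0, hy1⟩ := hy
    constructor <;> nlinarith

theorem push_one_eq {y : ℝ} {m : ℤ} (h : |y - m| ≤ 1 / 3) : push 1 y = m := by
  rw [abs_le] at h
  rcases lt_or_ge y m with hy | hy
  · have hf : ⌊y⌋ = m - 1 := Int.floor_eq_iff.2 ⟨by push_cast; linarith, by push_cast; linarith⟩
    have h1 : Int.fract y = y - (m - 1) := by
      rw [← Int.self_sub_floor, hf]
      push_cast
      ring
    unfold push
    rw [clamp_of_one_le (by rw [h1]; linarith), h1]
    ring
  · have hf : ⌊y⌋ = m := Int.floor_eq_iff.2 ⟨hy, by linarith⟩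
    have h1 : Int.fract y = y - m := by rw [← Int.self_sub_floor, hf]
    unfold push
    rw [clamp_of_nonpos (by rw [h1]; linarith), h1]
    ring

variable {N : ℕ}

theorem dist_le_one_of_mem_cell {e : (Fin N → ℤ) × Finset (Fin N)} {x z : Fin N → ℝ}
    (hx : x ∈ cell e) (hz : z ∈ cell e) : dist x z ≤ 1 := by
  rw [dist_pi_le_iff zero_le_one]
  intro j
  have h1 := hx j
  have h2 := hz j
  have h3 : (if j ∈ e.2 then (1 : ℝ) else 0) ≤ 1 := by split_ifs <;> norm_num
  rw [Real.dist_eq, abs_le]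
  constructor <;> linarith

theorem finite_cells (M : ℝ) :
    {e : (Fin N → ℤ) × Finset (Fin N) | cell e ⊆ closedBall 0 M}.Finite := by
  refine ((finite_Icc (fun _ : Fin N => -⌈M⌉) (fun _ => ⌈M⌉)).prod finite_univ).subset ?_
  rintro ⟨c, S⟩ h
  have hc : (fun j => (c j : ℝ)) ∈ cell (c, S) := by
    intro j
    refine ⟨le_rfl, ?_⟩
    simp only
    split_ifs <;> linarith
  have h1 := h hc
  rw [mem_closedBall_zero_iff] at h1
  have h2 : ∀ j, |(c j : ℝ)| ≤ ⌈M⌉ := fun j =>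
    ((norm_le_pi_norm (fun j => (c j : ℝ)) j).trans h1).trans (Int.le_ceil M)
  refine ⟨⟨fun j => ?_, fun j => ?_⟩, trivial⟩
  · have := (abs_le.1 (h2 j)).1
    exact_mod_cast this
  · have := (abs_le.1 (h2 j)).2
    exact_mod_cast this

/-- The points of `ℝ^N` at most `p` of whose coordinates are further than `1/3` from
`s + ℤ`. -/
def nearSkel (N p : ℕ) (s : ℝ) : Set (Fin N → ℝ) :=
  {x | N ≤ p + (Finset.univ.filter fun j => ∃ m : ℤ, |x j - s - m| ≤ 1 / 3).card}

/-- The case of the unshifted lattice in `exists_push`: the map `a₀` is extended over the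
`p`-skeleton and precomposed with the coordinatewise deformation `push`. -/
theorem exists_push_zero {X : Type*} [TopologicalSpace X] {p : ℕ}
    (hX : ∀ k ≤ p, BallExt (Fin k → ℝ) X) {D B : Set (Fin N → ℝ)}
    (hB : Bornology.IsBounded B) {a₀ : (Fin N → ℝ) → X} (ha₀ : ContinuousOn a₀ D)
    {l : (Fin N → ℝ) → ℝ} (hl : Continuous l) (hl01 : ∀ x, l x ∈ Icc (0 : ℝ) 1) :
    ∃ α : (Fin N → ℝ) → X,
      ContinuousOn α (B ∩ ({x | closedBall x 1 ⊆ D} ∪ (nearSkel N p 0 ∩ {x | l x = 1}))) ∧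
      ∀ x ∈ B, closedBall x 1 ⊆ D → l x = 0 → α x = a₀ x := by
  obtain ⟨M, hM⟩ := hB.subset_closedBall 0
  set G := (finite_cells (N := N) (M + 2)).toFinset with hGdef
  have hGmem : ∀ e, e ∈ G ↔ cell e ⊆ closedBall 0 (M + 2) := fun e => by
    rw [hGdef, Finite.mem_toFinset]
    rfl
  set A := ⋃ e ∈ G.filter fun e => cell e ⊆ D, cell e with hAdef
  have hA : IsClosed A :=
    Set.Finite.isClosed_biUnion (Finset.finite_toSet _) fun e _ => isClosed_cell e
  have hAD : A ⊆ D := iUnion₂_subset fun e he => (Finset.mem_filter.1 he).2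
  obtain ⟨a, ha, hea⟩ := extend_skeleton hX hA (cellular_biUnion _) (ha₀.mono hAD) G
    fun e he e' h => (hGmem e').2 (h.trans ((hGmem e).1 he))
  let r : (Fin N → ℝ) → (Fin N → ℝ) := fun x j => push (l x) (x j)
  have hr : Continuous r := continuous_pi fun j =>
    continuous_push.comp (hl.prodMk (continuous_apply j))
  have hfl : ∀ x : Fin N → ℝ, x ∈ cell (fun j => ⌊x j⌋, Finset.univ) := fun x j =>
    ⟨Int.floor_le _, by simpa using (Int.lt_floor_add_one (x j)).le⟩
  have hrc : ∀ x : Fin N → ℝ, r x ∈ cell (fun j => ⌊x j⌋, Finset.univ) := fun x j => by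
    have := push_mem (hl01 x) (y := x j) (m := ⌊x j⌋)
      ⟨Int.floor_le _, (Int.lt_floor_add_one (x j)).le⟩
    simpa using this
  have hWA : ∀ x ∈ B, closedBall x 1 ⊆ D →
      cell (fun j => ⌊x j⌋, Finset.univ) ⊆ A := by
    intro x hx hxD
    refine subset_biUnion_of_mem (u := cell) (Finset.mem_coe.2 (Finset.mem_filter.2 ⟨?_, ?_⟩))
    · rw [hGmem]
      intro z hz
      have h1 := mem_closedBall.1 (hM hx)
      have h2 := dist_le_one_of_mem_cell hz (hfl x)
      rw [mem_closedBall]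
      linarith [dist_triangle z x 0]
    · exact fun z hz => hxD (mem_closedBall.2 (dist_le_one_of_mem_cell hz (hfl x)))
  refine ⟨a ∘ r, ha.comp hr.continuousOn ?_, ?_⟩
  · rintro x ⟨hx, hxD | ⟨hxZ, hxl⟩⟩
    · exact Or.inl (hWA x hx hxD (hrc x))
    · right
      set z := r x with hz
      let S : Finset (Fin N) := Finset.univ.filter fun j => ¬ ∃ m : ℤ, z j = m
      have hzc : z ∈ cell (fun j => ⌊z j⌋, S) := by
        intro j
        refine ⟨Int.floor_le _, ?_⟩
        simp only
        split_ifs with h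
        · exact (Int.lt_floor_add_one (z j)).le
        · simp only [S, Finset.mem_filter, Finset.mem_univ, true_and, not_not] at h
          obtain ⟨m, hm⟩ := h
          rw [hm]
          simp
      refine mem_biUnion (Finset.mem_coe.2 (Finset.mem_filter.2 ⟨?_, ?_⟩)) hzc
      · rw [hGmem]
        intro w hw
        have h1 := mem_closedBall.1 (hM hx)
        have h2 := dist_le_one_of_mem_cell hw hzc
        have h3 := dist_le_one_of_mem_cell (hrc x) (hfl x)
        rw [mem_closedBall]
        linarith [dist_triangle w z 0, dist_triangle z x 0]
      · have h1 : (Finset.univ.filter fun j => ∃ m : ℤ, |x j - 0 - m| ≤ 1 / 3) ⊆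
            Finset.univ.filter fun j => ∃ m : ℤ, z j = m := by
          intro j hj
          simp only [Finset.mem_filter, Finset.mem_univ, true_and, sub_zero] at hj ⊢
          obtain ⟨m, hm⟩ := hj
          refine ⟨m, ?_⟩
          have hxl' : l x = 1 := hxl
          simp only [hz, r, hxl']
          exact push_one_eq hm
        have h2 := Finset.card_le_card h1
        have h3 : N ≤ p + _ := hxZ
        have h4 := Finset.card_filter_add_card_filter_not (s := (Finset.univ : Finset (Fin N)))
          (fun j => ∃ m : ℤ, z j = m)
        rw [Finset.card_univ, Fintype.card_fin] at h4
        simp only [S]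
        omega
  · intro x hx hxD hlx
    have : r x = x := by
      funext j
      simp [r, hlx, push_zero]
    rw [Function.comp_apply, this]
    exact hea (hWA x hx hxD (hfl x))

/-- Over a bounded set `B`, a map `a₀` defined on `D` can be traded for a map `α` that is defined
both well inside `D` and, where `l = 1`, near the `p`-skeleton of the shifted lattice, without
change where `l = 0`. -/
theorem exists_push {X : Type*} [TopologicalSpace X] {p : ℕ} (s : ℝ)
    (hX : ∀ k ≤ p, BallExt (Fin k → ℝ) X) {D B : Set (Fin N → ℝ)}
    (hB : Bornology.IsBounded B) {a₀ : (Fin N → ℝ) → X} (ha₀ : ContinuousOn a₀ D)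
    {l : (Fin N → ℝ) → ℝ} (hl : Continuous l) (hl01 : ∀ x, l x ∈ Icc (0 : ℝ) 1) :
    ∃ α : (Fin N → ℝ) → X,
      ContinuousOn α (B ∩ ({x | closedBall x 1 ⊆ D} ∪ (nearSkel N p s ∩ {x | l x = 1}))) ∧
      ∀ x ∈ B, closedBall x 1 ⊆ D → l x = 0 → α x = a₀ x := by
  let τ : (Fin N → ℝ) ≃ᵢ (Fin N → ℝ) := IsometryEquiv.addRight fun _ => s
  have hτc : Continuous τ := τ.continuous
  obtain ⟨α, hα, hαe⟩ := exists_push_zero (N := N) hX (D := τ ⁻¹' D) (B := τ ⁻¹' B)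
    (τ.isometry.antilipschitz.isBounded_preimage hB)
    (ha₀.comp hτc.continuousOn (mapsTo_preimage _ _)) (hl.comp hτc) (fun x => hl01 _)
  have hball : ∀ x, closedBall x 1 ⊆ D → closedBall (τ.symm x) 1 ⊆ τ ⁻¹' D := by
    intro x hx z hz
    refine hx ?_
    rw [mem_closedBall] at hz ⊢
    rwa [← τ.apply_symm_apply x, τ.isometry.dist_eq]
  refine ⟨α ∘ τ.symm, hα.comp τ.symm.continuous.continuousOn ?_, ?_⟩
  · rintro x ⟨hx, hx'⟩
    refine ⟨by simpa using hx, ?_⟩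
    rcases hx' with hxD | ⟨hxZ, hxl⟩
    · exact Or.inl (hball x hxD)
    · refine Or.inr ⟨?_, by simpa using hxl⟩
      have hτs : ∀ j, τ.symm x j = x j - s := fun j => (sub_eq_add_neg (x j) s).symm
      have hxZ' : N ≤ p + _ := hxZ
      simpa only [nearSkel, mem_ofPred_eq, hτs, sub_zero] using hxZ'
  · intro x hx hxD hlx
    have := hαe (τ.symm x) (by simpa using hx) (hball x hxD) (by simpa using hlx)
    simpa using this

end JoinConn

/-! ### Coordinates on the join -/

namespace JoinConn

open Set Metric Topology

/-- The truncation of a real number to the unit interval. -/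
noncomputable def clampI (t : ℝ) : I := ⟨clamp t, clamp_nonneg t, clamp_le_one t⟩

theorem continuous_clampI : Continuous clampI := continuous_clamp.subtype_mk _

theorem clampI_of_nonpos {t : ℝ} (h : t ≤ 0) : clampI t = 0 := Subtype.ext (clamp_of_nonpos h)

theorem clampI_of_one_le {t : ℝ} (h : 1 ≤ t) : clampI t = 1 := Subtype.ext (clamp_of_one_le h)

theorem clampI_coe (t : I) : clampI t = t :=
  Subtype.ext (by simp [clampI, clamp, t.2.1, t.2.2])

variable {X Y : Type*}

/-- The point of the join with coordinates `x`, `y`, `t`. -/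
def jmk (x : X) (y : Y) (t : I) : TopJoin X Y := Quot.mk _ (x, y, t)

theorem jmk_zero (x : X) (y y₂ : Y) : jmk x y 0 = jmk x y₂ 0 := Quot.sound (.fst x y y₂)

theorem jmk_one (x x₂ : X) (y : Y) : jmk x y 1 = jmk x₂ y 1 := Quot.sound (.snd x x₂ y)

/-- The join coordinate `t`. -/
def jT : TopJoin X Y → ℝ := Quot.lift (fun p => (p.2.2 : ℝ)) (by rintro _ _ (_ | _) <;> rfl)

/-- The coordinate in `X`, with the junk value `x₀` at the end `t = 1` where it is undefined. -/
noncomputable def jX (x₀ : X) : TopJoin X Y → X :=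
  Quot.lift (fun p => if p.2.2 = 1 then x₀ else p.1) (by rintro _ _ (_ | _) <;> simp)

/-- The coordinate in `Y`, with the junk value `y₀` at the end `t = 0` where it is undefined. -/
noncomputable def jY (y₀ : Y) : TopJoin X Y → Y :=
  Quot.lift (fun p => if p.2.2 = 0 then y₀ else p.2.1) (by rintro _ _ (_ | _) <;> simp)

variable [TopologicalSpace X] [TopologicalSpace Y]

theorem isQuotientMap_mk :
    IsQuotientMap fun p : X × Y × I => jmk p.1 p.2.1 p.2.2 := ⟨⟨rfl⟩, Quot.mk_surjective⟩

theorem continuous_jmk : Continuous fun p : X × Y × I => jmk p.1 p.2.1 p.2.2 :=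
  isQuotientMap_mk.continuous

theorem continuous_jT : Continuous (jT : TopJoin X Y → ℝ) := by
  rw [isQuotientMap_mk.continuous_iff]
  change Continuous fun p : X × Y × I => (p.2.2 : ℝ)
  fun_prop

theorem continuousOn_jX (x₀ : X) : ContinuousOn (jX x₀ : TopJoin X Y → X) {z | jT z < 1} := by
  have ho : IsOpen {z : TopJoin X Y | jT z < 1} := isOpen_lt continuous_jT continuous_const
  refine (isQuotientMap_mk.continuousOn_isOpen_iff ho).2 ?_
  refine (continuous_fst (X := X) (Y := Y × I)).continuousOn.congr ?_
  rintro ⟨x, y, t⟩ h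
  have h' : (t : ℝ) < 1 := h
  have : t ≠ 1 := by rintro rfl; exact lt_irrefl _ h'
  exact if_neg this

theorem continuousOn_jY (y₀ : Y) : ContinuousOn (jY y₀ : TopJoin X Y → Y) {z | 0 < jT z} := by
  have ho : IsOpen {z : TopJoin X Y | 0 < jT z} := isOpen_lt continuous_const continuous_jT
  refine (isQuotientMap_mk.continuousOn_isOpen_iff ho).2 ?_
  refine (continuous_fst.comp (continuous_snd (X := X) (Y := Y × I))).continuousOn.congr ?_
  rintro ⟨x, y, t⟩ h
  have h' : 0 < (t : ℝ) := h
  have : t ≠ 0 := by rintro rfl; exact lt_irrefl _ h'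
  exact if_neg this

/-- A deformation of the join parameter, fixing `0` and `1`, which ends with a map crushing
`[0, 4/9]` to `0` and `[5/9, 1]` to `1`. -/
noncomputable def squeeze (l t : ℝ) : ℝ := (1 - l) * t + l * clamp (9 * t - 4)

/-- The homotopy of the join induced by `squeeze`, in curried form. -/
noncomputable def jH : TopJoin X Y → C(I, TopJoin X Y) :=
  Quot.lift (fun p => ⟨fun l => jmk p.1 p.2.1 (clampI (squeeze l p.2.2)), by
    refine continuous_jmk.comp (continuous_const.prodMk (continuous_const.prodMk
      (continuous_clampI.comp ?_)))
    unfold squeeze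
    fun_prop⟩) (by
    rintro _ _ (⟨x, y, y'⟩ | ⟨x, x', y⟩)
    · ext l
      have : clampI (squeeze l (0 : I)) = 0 := clampI_of_nonpos (by
        simp [squeeze, clamp_of_nonpos])
      simp only [ContinuousMap.coe_mk, this]
      exact jmk_zero _ _ _
    · ext l
      have : clampI (squeeze l (1 : I)) = 1 := clampI_of_one_le (by
        rw [squeeze, clamp_of_one_le (by norm_num)]
        simp)
      simp only [ContinuousMap.coe_mk, this]
      exact jmk_one _ _ _)

theorem continuous_jH : Continuous fun q : TopJoin X Y × I => jH q.1 q.2 := by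
  have h : Continuous (jH : TopJoin X Y → C(I, TopJoin X Y)) := by
    rw [isQuotientMap_mk.continuous_iff]
    let Φ : C((X × Y × I) × I, TopJoin X Y) :=
      ⟨fun q => jmk q.1.1 q.1.2.1 (clampI (squeeze q.2 q.1.2.2)), by
        refine continuous_jmk.comp (Continuous.prodMk (by fun_prop) (Continuous.prodMk
          (by fun_prop) (continuous_clampI.comp ?_)))
        unfold squeeze
        refine Continuous.add (by fun_prop) (Continuous.mul (by fun_prop)
          (continuous_clamp.comp (by fun_prop)))⟩
    exact Φ.curry.continuous
  exact (h.comp continuous_fst).eval continuous_snd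

theorem jH_zero (z : TopJoin X Y) : jH z 0 = z := by
  obtain ⟨x, y, t⟩ := z
  change jmk x y (clampI (squeeze (0 : ℝ) t)) = jmk x y t
  simp [squeeze, clampI_coe]

theorem jH_one (x₀ : X) (y₀ : Y) (z : TopJoin X Y) :
    jH z 1 = jmk (jX x₀ z) (jY y₀ z) (clampI (9 * jT z - 4)) := by
  obtain ⟨x, y, t⟩ := z
  change jmk x y (clampI (squeeze (1 : ℝ) t)) =
    jmk (if t = 1 then x₀ else x) (if t = 0 then y₀ else y) (clampI (9 * (t : ℝ) - 4))
  have h : clampI (squeeze (1 : ℝ) t) = clampI (9 * (t : ℝ) - 4) := by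
    have := clampI_coe (clampI (9 * (t : ℝ) - 4))
    rw [← this]
    simp [squeeze, clampI]
  rw [h]
  by_cases h0 : t = 0
  · subst h0
    rw [clampI_of_nonpos (by simp), if_neg zero_ne_one]
    exact jmk_zero _ _ _
  · rw [if_neg h0]
    by_cases h1 : t = 1
    · subst h1
      rw [clampI_of_one_le (by norm_num)]
      exact jmk_one _ _ _
    · rw [if_neg h1]

/-- A map to the join given by coordinates is continuous if the coordinate in `X` is continuous
where `T < 2`, and the coordinate in `Y` where `T > -1`; the join parameter is the truncation
of `T` to the unit interval. -/
theorem continuousOn_jmk {P : Type*} [TopologicalSpace P] {B : Set P} {T : P → ℝ} {α : P → X}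
    {β : P → Y} (hT : ContinuousOn T B) (hα : ContinuousOn α (B ∩ {x | T x < 2}))
    (hβ : ContinuousOn β (B ∩ {x | -1 < T x})) :
    ContinuousOn (fun x => jmk (α x) (β x) (clampI (T x))) B := by
  intro x hx
  have hTI : ContinuousWithinAt (fun x => clampI (T x)) B x :=
    continuous_clampI.continuousAt.comp_continuousWithinAt (hT x hx)
  have hlt : ∀ c, T x < c → ∀ᶠ y in 𝓝[B] x, T y < c := fun c hc =>
    (hT x hx).eventually (gt_mem_nhds hc)
  have hgt : ∀ c, c < T x → ∀ᶠ y in 𝓝[B] x, c < T y := fun c hc =>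
    (hT x hx).eventually (lt_mem_nhds hc)
  have hα' : T x < 2 → ContinuousWithinAt α B x := fun h =>
    (hα x ⟨hx, h⟩).mono_of_mem_nhdsWithin (Filter.inter_mem self_mem_nhdsWithin (hlt 2 h))
  have hβ' : -1 < T x → ContinuousWithinAt β B x := fun h =>
    (hβ x ⟨hx, h⟩).mono_of_mem_nhdsWithin (Filter.inter_mem self_mem_nhdsWithin (hgt (-1) h))
  rcases lt_or_ge (T x) 0 with h0 | h0
  · have : ContinuousWithinAt (fun z => jmk (α z) (β x) (clampI (T z))) B x :=
      continuous_jmk.continuousAt.comp_continuousWithinAt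
        ((hα' (by linarith)).prodMk (continuousWithinAt_const.prodMk hTI))
    refine this.congr_of_eventuallyEq ?_ rfl
    filter_upwards [hlt 0 h0] with z hz
    rw [clampI_of_nonpos hz.le]
    exact jmk_zero _ _ _
  · rcases lt_or_ge 1 (T x) with h1 | h1
    · have : ContinuousWithinAt (fun z => jmk (α x) (β z) (clampI (T z))) B x :=
        continuous_jmk.continuousAt.comp_continuousWithinAt
          (continuousWithinAt_const.prodMk ((hβ' (by linarith)).prodMk hTI))
      refine this.congr_of_eventuallyEq ?_ rfl
      filter_upwards [hgt 1 h1] with z hz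
      rw [clampI_of_one_le hz.le]
      exact jmk_one _ _ _
    · exact continuous_jmk.continuousAt.comp_continuousWithinAt
        ((hα' (by linarith)).prodMk ((hβ' (by linarith)).prodMk hTI))

end JoinConn

/-! ### The extension property of a join -/

namespace JoinConn

open Set Metric Topology

/-- Radial projection to the unit sphere (with value `0` at `0`). -/
noncomputable def radial {E : Type*} [NormedAddCommGroup E] [NormedSpace ℝ E] (x : E) : E :=
  ‖x‖⁻¹ • x

section radial

variable {E : Type*} [NormedAddCommGroup E] [NormedSpace ℝ E]

theorem radial_mem_sphere {x : E} (hx : x ≠ 0) : radial x ∈ sphere (0 : E) 1 := by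
  rw [mem_sphere_zero_iff_norm, radial, norm_smul, norm_inv, norm_norm,
    inv_mul_cancel₀ (norm_ne_zero_iff.2 hx)]

theorem continuousOn_radial : ContinuousOn (radial : E → E) {x | x ≠ 0} :=
  (continuous_norm.continuousOn.inv₀ fun _ hx => norm_ne_zero_iff.2 hx).smul continuousOn_id

theorem dist_radial_le {x y : E} (hx : x ≠ 0) (hy : y ≠ 0) :
    dist (radial x) (radial y) ≤ 2 * dist x y / ‖x‖ := by
  have hx' : 0 < ‖x‖ := norm_pos_iff.2 hx
  have hy' : 0 < ‖y‖ := norm_pos_iff.2 hy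
  have h1 : radial x - radial y = ‖x‖⁻¹ • (x - y) + (‖x‖⁻¹ - ‖y‖⁻¹) • y := by
    simp only [radial]
    module
  have h2 : ‖(‖x‖⁻¹ - ‖y‖⁻¹) • y‖ ≤ ‖x‖⁻¹ * ‖x - y‖ := by
    rw [norm_smul, Real.norm_eq_abs]
    have h3 : ‖x‖⁻¹ - ‖y‖⁻¹ = (‖y‖ - ‖x‖) * (‖x‖⁻¹ * ‖y‖⁻¹) := by field_simp
    rw [h3, abs_mul, abs_of_pos (by positivity : 0 < ‖x‖⁻¹ * ‖y‖⁻¹)]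
    have h4 : |‖y‖ - ‖x‖| ≤ ‖x - y‖ := by
      rw [norm_sub_rev]
      exact abs_norm_sub_norm_le y x
    have h5 : |‖y‖ - ‖x‖| * (‖x‖⁻¹ * ‖y‖⁻¹) * ‖y‖ = ‖x‖⁻¹ * |‖y‖ - ‖x‖| := by field_simp
    rw [h5]
    gcongr
  rw [dist_eq_norm, dist_eq_norm, h1]
  refine (norm_add_le _ _).trans ?_
  rw [norm_smul, norm_inv, norm_norm]
  have : 2 * ‖x - y‖ / ‖x‖ = ‖x‖⁻¹ * ‖x - y‖ + ‖x‖⁻¹ * ‖x - y‖ := by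
    field_simp
    ring
  linarith

/-- The radial extension of a continuous function on the sphere varies slowly far away from
the origin. -/
theorem exists_radius [FiniteDimensional ℝ E] {u : E → ℝ}
    (hu : ContinuousOn u (sphere 0 1)) :
    ∃ R : ℝ, 1 ≤ R ∧ ∀ x y : E, R ≤ ‖x‖ → R ≤ ‖y‖ → dist x y ≤ 1 →
      |u (radial x) - u (radial y)| < 1 / 3 := by
  have : ProperSpace E := FiniteDimensional.proper ℝ E
  have huc := (isCompact_sphere (0 : E) 1).uniformContinuousOn_of_continuous hu
  obtain ⟨δ, hδ, h⟩ := Metric.uniformContinuousOn_iff.1 huc (1 / 3) (by norm_num)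
  refine ⟨max 1 (3 / δ), le_max_left _ _, fun x y hx hy hxy => ?_⟩
  have hx1 : 1 ≤ ‖x‖ := (le_max_left _ _).trans hx
  have hy1 : 1 ≤ ‖y‖ := (le_max_left _ _).trans hy
  have hx0 : x ≠ 0 := norm_pos_iff.1 (by linarith)
  have hy0 : y ≠ 0 := norm_pos_iff.1 (by linarith)
  refine h _ (radial_mem_sphere hx0) _ (radial_mem_sphere hy0)
    ((dist_radial_le hx0 hy0).trans_lt ?_)
  rw [div_lt_iff₀ (by linarith)]
  have h3 : 3 / δ ≤ ‖x‖ := (le_max_right _ _).trans hx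
  rw [div_le_iff₀ hδ] at h3
  linarith

end radial

theorem isOpen_count {N p : ℕ} {O : Set ℝ} (hO : IsOpen O) :
    IsOpen {x : Fin N → ℝ | N ≤ p + (Finset.univ.filter fun j => x j ∈ O).card} := by
  rw [isOpen_iff_mem_nhds]
  intro x hx
  have h : ∀ᶠ y in 𝓝 x, ∀ j, x j ∈ O → y j ∈ O := by
    rw [Filter.eventually_all]
    intro j
    by_cases hj : x j ∈ O
    · filter_upwards [(continuous_apply j).continuousAt.eventually (hO.mem_nhds hj)] with y hy _
        using hy
    · exact Filter.Eventually.of_forall fun y h => absurd h hj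
  filter_upwards [h] with y hy
  have hx' : N ≤ p + _ := hx
  refine hx'.trans (Nat.add_le_add_left (Finset.card_le_card fun j hj => ?_) p)
  simp only [Finset.mem_filter, Finset.mem_univ, true_and] at hj ⊢
  exact hy j hj

/-- For `N ≤ p + q + 1`, the space `ℝ^N` is covered by neighbourhoods of the `p`-skeleton of the
cubical lattice and of the `q`-skeleton of the dual lattice; here is a function separating the
complements of the two. -/
theorem exists_separator {N p q : ℕ} (h : N ≤ p + q + 1) :
    ∃ s : (Fin N → ℝ) → ℝ, Continuous s ∧ (∀ x, s x < 1 → x ∈ nearSkel N p 0) ∧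
      ∀ x, 0 < s x → x ∈ nearSkel N q (1 / 2) := by
  let O : ℝ → Set ℝ := fun c => {y | ∃ m : ℤ, |y - c - m| < 1 / 3}
  have hO : ∀ c, IsOpen (O c) := by
    intro c
    have : O c = ⋃ m : ℤ, {y | |y - c - m| < 1 / 3} := by
      ext y
      simp [O]
    rw [this]
    exact isOpen_iUnion fun m => isOpen_lt (by fun_prop) continuous_const
  have hcov : ∀ y, y ∉ O 0 → y ∈ O (1 / 2) := by
    intro y hy
    have h1 := Int.floor_add_fract y
    have h2 := Int.fract_nonneg y
    have h3 := Int.fract_lt_one y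
    refine ⟨⌊y⌋, ?_⟩
    rw [abs_lt]
    by_contra hc
    refine hy ?_
    rcases lt_or_ge (Int.fract y) (1 / 3) with h4 | h4
    · refine ⟨⌊y⌋, ?_⟩
      rw [abs_lt]
      constructor <;> linarith
    · refine ⟨⌊y⌋ + 1, ?_⟩
      push_cast
      have h5 : 2 / 3 < Int.fract y := by
        by_contra h5
        exact hc ⟨by linarith, by linarith⟩
      rw [abs_lt]
      constructor <;> linarith
  let U : ℕ → ℝ → Set (Fin N → ℝ) := fun r c =>
    {x | N ≤ r + (Finset.univ.filter fun j => x j ∈ O c).card}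
  have hU : ∀ r c, IsOpen (U r c) := fun r c => isOpen_count (hO c)
  have hnear : ∀ r c, U r c ⊆ nearSkel N r c := by
    intro r c x hx
    have hx' : N ≤ r + _ := hx
    refine hx'.trans (Nat.add_le_add_left (Finset.card_le_card fun j hj => ?_) r)
    simp only [Finset.mem_filter, Finset.mem_univ, true_and] at hj ⊢
    obtain ⟨m, hm⟩ := hj
    exact ⟨m, hm.le⟩
  have hdisj : Disjoint (U q (1 / 2))ᶜ (U p 0)ᶜ := by
    rw [Set.disjoint_left]
    intro x hx hx'
    simp only [U, mem_compl_iff, mem_ofPred_eq, not_le] at hx hx'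
    have h4 := Finset.card_filter_add_card_filter_not (s := (Finset.univ : Finset (Fin N)))
      (fun j => x j ∈ O 0)
    rw [Finset.card_univ, Fintype.card_fin] at h4
    have h5 : (Finset.univ.filter fun j => ¬ x j ∈ O 0).card ≤
        (Finset.univ.filter fun j => x j ∈ O (1 / 2)).card :=
      Finset.card_le_card fun j hj => by
        simp only [Finset.mem_filter, Finset.mem_univ, true_and] at hj ⊢
        exact hcov _ hj
    omega
  obtain ⟨s, hs0, hs1, -⟩ := exists_continuous_zero_one_of_isClosed
    (hU q (1 / 2)).isClosed_compl (hU p 0).isClosed_compl hdisj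
  refine ⟨s, s.continuous, fun x hx => ?_, fun x hx => ?_⟩
  · by_contra hc
    have := hs1 (fun h => hc (hnear _ _ h) : x ∈ (U p 0)ᶜ)
    simp only [Pi.one_apply] at this
    linarith
  · by_contra hc
    have := hs0 (fun h => hc (hnear _ _ h) : x ∈ (U q (1 / 2))ᶜ)
    simp only [Pi.zero_apply] at this
    linarith

/-- A map from the `(N - 1)`-sphere to the join extends over the ball: far out its components are
the coordinates of the given map, further in they are extended over neighbourhoods of complementary
skeleta of dual lattices, and the join parameter interpolates. -/
theorem ballExt_join {X Y : Type*} [TopologicalSpace X] [TopologicalSpace Y]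
    (x₀ : X) (y₀ : Y) {N p q : ℕ} (hX : ∀ k ≤ p, BallExt (Fin k → ℝ) X)
    (hY : ∀ k ≤ q, BallExt (Fin k → ℝ) Y) (hN : N ≤ p + q + 1) :
    BallExt (Fin N → ℝ) (TopJoin X Y) := by
  intro f hf
  obtain ⟨R, hR1, hR⟩ := exists_radius (continuous_jT.comp_continuousOn hf)
  simp only [Function.comp_apply] at hR
  obtain ⟨s, hs, hsX, hsY⟩ := exists_separator hN
  set t : (Fin N → ℝ) → ℝ := fun x => jT (f (radial x)) with ht
  have hfr : ContinuousOn (fun x => f (radial x)) {x : Fin N → ℝ | x ≠ 0} :=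
    hf.comp continuousOn_radial fun x hx => radial_mem_sphere hx
  have htc : ContinuousOn t {x | x ≠ 0} := continuous_jT.comp_continuousOn hfr
  have hne : ∀ x : Fin N → ℝ, R ≤ ‖x‖ → x ≠ 0 := fun x hx =>
    norm_pos_iff.1 (by linarith)
  let l : (Fin N → ℝ) → ℝ := fun x => clamp (R + 4 - ‖x‖)
  let m : (Fin N → ℝ) → ℝ := fun x => clamp (R + 3 - ‖x‖)
  have hl : Continuous l := continuous_clamp.comp (by fun_prop)
  have hm : Continuous m := continuous_clamp.comp (by fun_prop)
  have hl01 : ∀ x, l x ∈ Icc (0 : ℝ) 1 := fun x => ⟨clamp_nonneg _, clamp_le_one _⟩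
  have hm1 : ∀ x, m x < 1 → R + 2 < ‖x‖ := by
    intro x hx
    by_contra hc
    exact hx.ne (clamp_of_one_le (by linarith))
  have hm0 : ∀ x, 0 < m x → l x = 1 := by
    intro x hx
    refine clamp_of_one_le ?_
    by_contra hc
    exact hx.ne' (clamp_of_nonpos (by linarith))
  -- The `X`-coordinate of the radial extension of `f` makes sense on `DX`, the `Y`-coordinate
  -- on `DY`; the origin is avoided because the radial extension is undefined there.
  let DX : Set (Fin N → ℝ) := {x | R ≤ ‖x‖ ∧ t x < 1}
  let DY : Set (Fin N → ℝ) := {x | R ≤ ‖x‖ ∧ 0 < t x}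
  have hball : ∀ x z : Fin N → ℝ, R + 1 ≤ ‖x‖ → z ∈ closedBall x 1 →
      R ≤ ‖z‖ ∧ |t x - t z| < 1 / 3 := by
    intro x z hx hz
    rw [mem_closedBall, dist_comm] at hz
    have h1 : R ≤ ‖z‖ := by
      have := norm_sub_norm_le x z
      rw [← dist_eq_norm] at this
      linarith
    exact ⟨h1, hR x z (by linarith) h1 hz⟩
  have hWX : ∀ x, R + 1 ≤ ‖x‖ → t x < 2 / 3 → closedBall x 1 ⊆ DX := by
    intro x hx htx z hz
    obtain ⟨h1, h2⟩ := hball x z hx hz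
    exact ⟨h1, by linarith [(abs_lt.1 h2).1]⟩
  have hWY : ∀ x, R + 1 ≤ ‖x‖ → 1 / 3 < t x → closedBall x 1 ⊆ DY := by
    intro x hx htx z hz
    obtain ⟨h1, h2⟩ := hball x z hx hz
    exact ⟨h1, by linarith [(abs_lt.1 h2).2]⟩
  obtain ⟨α, hα, hαe⟩ := exists_push (N := N) 0 hX (D := DX) (B := closedBall 0 (R + 4))
    isBounded_closedBall (a₀ := fun x => jX x₀ (f (radial x)))
    ((continuousOn_jX x₀).comp (hfr.mono fun x hx => hne x hx.1) fun x hx => hx.2) hl hl01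
  obtain ⟨β, hβ, hβe⟩ := exists_push (N := N) (1 / 2) hY (D := DY) (B := closedBall 0 (R + 4))
    isBounded_closedBall (a₀ := fun x => jY y₀ (f (radial x)))
    ((continuousOn_jY y₀).comp (hfr.mono fun x hx => hne x hx.1) fun x hx => hx.2) hl hl01
  -- `T < 2` forces `m < 1` and `t < 2/3`, or `m > 0` and `s < 1`; in both cases `α` is continuous
  -- there. Likewise `T > -1` forces `m < 1` and `t > 1/3`, or `m > 0` and `s > 0`.
  let T : (Fin N → ℝ) → ℝ := fun x => (1 - m x) * (9 * t x - 4) + m x * (3 * s x - 1)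
  have hT : Continuous T := by
    rw [continuous_iff_continuousAt]
    intro x
    rcases lt_or_ge ‖x‖ (R + 2) with h | h
    · have : ContinuousAt (fun x => 3 * s x - 1) x := by fun_prop
      refine this.congr ?_
      filter_upwards [(isOpen_lt continuous_norm continuous_const).mem_nhds h] with z hz
      have hz' : ‖z‖ < R + 2 := hz
      have : m z = 1 := clamp_of_one_le (by linarith)
      simp [T, this]
    · have h0 : ContinuousAt t x :=
        htc.continuousAt (isOpen_ne.mem_nhds (hne x (by linarith)))
      have := hm.continuousAt (x := x)
      have := hs.continuousAt (x := x)
      fun_prop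
  have hF : ContinuousOn (fun x => jmk (α x) (β x) (clampI (T x))) (closedBall 0 (R + 4)) := by
    have hmI : ∀ x, 0 ≤ m x ∧ m x ≤ 1 := fun x => ⟨clamp_nonneg _, clamp_le_one _⟩
    refine continuousOn_jmk hT.continuousOn (hα.mono ?_) (hβ.mono ?_)
    · rintro x ⟨hx, hTx⟩
      refine ⟨hx, ?_⟩
      by_cases h : m x < 1 ∧ t x < 2 / 3
      · exact Or.inl (hWX x (by linarith [hm1 x h.1]) h.2)
      · have hTx' : (1 - m x) * (9 * t x - 4) + m x * (3 * s x - 1) < 2 := hTx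
        obtain ⟨h0, h1⟩ := hmI x
        have h2 : (1 - m x) * 2 ≤ (1 - m x) * (9 * t x - 4) := by
          rcases h1.eq_or_lt with h1 | h1
          · simp [h1]
          · have : 2 / 3 ≤ t x := by
              by_contra hc
              exact h ⟨h1, by linarith⟩
            exact mul_le_mul_of_nonneg_left (by linarith) (by linarith)
        have h3 : m x * (3 * s x - 1) < m x * 2 := by linarith
        have h4 : 0 < m x := by
          rcases h0.eq_or_lt with h0 | h0
          · rw [← h0] at h3
            simp at h3
          · exact h0
        have h5 := lt_of_mul_lt_mul_left h3 h0
        exact Or.inr ⟨hsX x (by linarith), hm0 x h4⟩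
    · rintro x ⟨hx, hTx⟩
      refine ⟨hx, ?_⟩
      by_cases h : m x < 1 ∧ 1 / 3 < t x
      · exact Or.inl (hWY x (by linarith [hm1 x h.1]) h.2)
      · have hTx' : -1 < (1 - m x) * (9 * t x - 4) + m x * (3 * s x - 1) := hTx
        obtain ⟨h0, h1⟩ := hmI x
        have h2 : (1 - m x) * (9 * t x - 4) ≤ (1 - m x) * (-1) := by
          rcases h1.eq_or_lt with h1 | h1
          · simp [h1]
          · have : t x ≤ 1 / 3 := by
              by_contra hc
              exact h ⟨h1, by linarith⟩
            exact mul_le_mul_of_nonneg_left (by linarith) (by linarith)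
        have h3 : m x * (-1) < m x * (3 * s x - 1) := by linarith
        have h4 : 0 < m x := by
          rcases h0.eq_or_lt with h0 | h0
          · rw [← h0] at h3
            simp at h3
          · exact h0
        have h5 := lt_of_mul_lt_mul_left h3 h0
        exact Or.inr ⟨hsY x (by linarith), hm0 x h4⟩
  have hFbd : ∀ x : Fin N → ℝ, ‖x‖ = R + 4 →
      jmk (α x) (β x) (clampI (T x)) = jH (f (radial x)) 1 := by
    intro x hx
    have hxB : x ∈ closedBall (0 : Fin N → ℝ) (R + 4) := mem_closedBall_zero_iff.2 hx.le
    have hlx : l x = 0 := clamp_of_nonpos (by linarith)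
    have hmx : m x = 0 := clamp_of_nonpos (by linarith)
    have hTx : T x = 9 * t x - 4 := by simp [T, hmx]
    rw [jH_one x₀ y₀, hTx]
    change jmk (α x) (β x) (clampI (9 * t x - 4)) =
      jmk (jX x₀ (f (radial x))) (jY y₀ (f (radial x))) (clampI (9 * t x - 4))
    rcases lt_or_ge (t x) (2 / 3) with h | h
    · rw [hαe x hxB (hWX x (by linarith) h) hlx]
      rcases lt_or_ge (1 / 3) (t x) with h' | h'
      · rw [hβe x hxB (hWY x (by linarith) h') hlx]
      · rw [clampI_of_nonpos (by linarith)]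
        exact jmk_zero _ _ _
    · rw [hβe x hxB (hWY x (by linarith) (by linarith)) hlx, clampI_of_one_le (by linarith)]
      exact jmk_one _ _ _
  refine extend_of_homotopy f (fun x r => jH (f x) (projIcc 0 1 zero_le_one r)) ?_ ?_
    (fun x => jmk (α ((R + 4) • x)) (β ((R + 4) • x)) (clampI (T ((R + 4) • x)))) ?_ ?_
  · refine continuous_jH.comp_continuousOn (ContinuousOn.prodMk
      (hf.comp continuousOn_fst fun z hz => hz.1) ?_)
    exact ((continuous_projIcc (h := zero_le_one)).comp continuous_snd).continuousOn
  · intro x _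
    simp only [projIcc_left]
    exact jH_zero _
  · refine hF.comp (continuous_const_smul (R + 4)).continuousOn fun x hx => ?_
    rw [mem_closedBall_zero_iff] at hx ⊢
    rw [norm_smul, Real.norm_of_nonneg (by linarith)]
    nlinarith
  · intro x hx
    rw [mem_sphere_zero_iff_norm] at hx
    have h1 : ‖(R + 4) • x‖ = R + 4 := by
      rw [norm_smul, Real.norm_of_nonneg (by linarith), hx, mul_one]
    have h2 : radial ((R + 4) • x) = x := by
      rw [radial, h1, smul_smul, inv_mul_cancel₀ (by linarith), one_smul]
    simp only [projIcc_right]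
    rw [hFbd _ h1, h2]
    rfl

end JoinConn

/-! ### Connectivity of joins -/

namespace JoinConn

theorem isNConnected_join {X Y : Type*} [TopologicalSpace X] [TopologicalSpace Y] {d e : ℤ}
    (hd : -1 ≤ d) (he : -1 ≤ e) (hX : IsNConnected d X) (hY : IsNConnected e Y) :
    IsNConnected (d + e + 2) (TopJoin X Y) := by
  obtain ⟨x₀⟩ := hX.1 hd
  obtain ⟨y₀⟩ := hY.1 he
  refine ⟨fun _ => ⟨jmk x₀ y₀ 0⟩, fun n hn z => subsingleton_of_ballExt n ?_ z⟩
  refine ballExt_join x₀ y₀ (p := (d + 1).toNat) (q := (e + 1).toNat)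
    (fun k hk => ballExt_of_isNConnected hX k (by omega))
    (fun k hk => ballExt_of_isNConnected hY k (by omega)) (by omega)

end JoinConn

/-- **Lemma (joins).** Let `X₁, …, Xₖ` be topological spaces with `Xᵢ` being
`dᵢ`-connected for each `i` (`dᵢ = -1` meaning `Xᵢ ≠ ∅`).  Then the iterated join
`X₁ * ⋯ * Xₖ` is `(-2 + ∑ᵢ (dᵢ + 2))`-connected. -/
theorem iterJoin_isNConnected (k : ℕ) (X : Fin k → TopCat.{0}) (d : Fin k → ℤ)
    (hd : ∀ i, -1 ≤ d i) (hX : ∀ i, IsNConnected (d i) (X i)) :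
    IsNConnected (-2 + ∑ i, (d i + 2)) (iterJoin (List.ofFn X)) := by
  induction k with
  | zero => exact ⟨fun h => by simp at h, fun n hn => by simp at hn; omega⟩
  | succ k ih =>
    cases k with
    | zero =>
      have hs : -2 + ∑ i, (d i + 2) = d 0 := by simp
      rw [hs, List.ofFn_succ, List.ofFn_zero, iterJoin]
      exact hX 0
    | succ k =>
      have ih' := ih (fun i => X i.succ) (fun i => d i.succ) (fun i => hd _) fun i => hX _
      have hsum : 0 ≤ ∑ i : Fin k, (d i.succ.succ + 2) :=
        Finset.sum_nonneg fun i _ => by linarith [hd i.succ.succ]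
      have h := JoinConn.isNConnected_join (hd 0) (e := -2 + ∑ i : Fin (k + 1), (d i.succ + 2))
        (by rw [Fin.sum_univ_succ]; linarith [hd (Fin.succ 0)]) (hX 0) ih'
      have hs : -2 + ∑ i, (d i + 2) = d 0 + (-2 + ∑ i : Fin (k + 1), (d i.succ + 2)) + 2 := by
        rw [Fin.sum_univ_succ]
        ring
      rw [hs, List.ofFn_succ, List.ofFn_succ, iterJoin]
      rw [List.ofFn_succ] at h
      exact h
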